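/- Let d1, d2 ≥ 1, α > 0, r ∈ (1,∞), r' = r/(r−1), and let b : ℝ^{d1}×ℝ^{d2} → ℂ be continuous. Define ‖b‖_{Ċ^{0,α}_{x1}(∙L^r_{x2})} = sup_{x1 ≠ y1 ∈ ℝ^{d1}} |x1−y1|^{−α} · inf_{c∈ℂ} ‖b(x1,·) − b(y1,·) − c‖_{L^r(ℝ^{d2})}. Then, with two-sided constants depending only on d1, d2, α, r, this quantity is comparable to the supremum, over all cubes I1 ⊂ ℝ^{d1}, all sparse collections 𝒮2 of cubes in ℝ^{d2}, and all nonnegative numbers (λ_{S2})_{S2∈𝒮2} with Σ_{S2∈𝒮2}|S2|·λ_{S2}^{r'} ≤ 1, of (|I1| ℓ(I1)^α)⁻¹ Σ_{S2∈𝒮2} λ_{S2} · osc^{1,1}(b, I1×S2); both quantities possibly +∞. -/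

import Mathlib

/-!
Write `osc(f, S) = ∫_S |f - ⟨f⟩_S|`. The theorem combines a one-parameter duality in the second
variable with a Hölder-type argument in the first variable.

*One parameter.* For continuous `f` and conjugate exponents `r, r'`, the quantity
`inf_c ‖f - c‖_{L^r}` is comparable to the supremum of `∑ λ_S osc(f, S)` over finite sparse families
with `∑ |S| λ_S^{r'} ≤ 1`. The upper bound for the sums (`sum_oscE_le_eLpNorm`) is Hölder's
inequality together with the Carleson embedding `carleson_embedding`, which follows from a weak type
bound (Vitali covering by five-fold dilates) and the layer cake formula. The converse
(`iInf_eLpNorm_le`) uses sparse domination on a cube `Q` (`sparse_domination`): up to a small error,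
`∫_Q |f - ⟨f⟩_Q| g` is at most a constant times `∑ |S|⁻¹ osc(f, S) ∫_S g` over a finite sparse family.
By continuity of `f` the stopping-time construction ends after finitely many dyadic generations.
Testing with `g = |f - ⟨f⟩_Q|^{r-1}` and exhausting the space by cubes gives the claim.

*Two parameters.* By Fubini, `osc^{1,1}(b, I × S)` is the integral over `x ∈ I` of the oscillation over
`S` of `b(x, ·) - ⟨b⟩_{I,1}` (`ofReal_osc11`), and oscillation is convex (`oscE_avgFst_le`).

The testing quantity is bounded by the Hölder norm because `b(x, ·) - ⟨b⟩_{I,1}` is the average over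
`y ∈ I` of the differences `b(x, ·) - b(y, ·)`, to which the one-parameter upper bound applies, and
`|x - y|` is at most `d1` times the side of `I` (`sum_osc11_le`).

Conversely, `b(x, ·)` and `b(y, ·)` are both compared with the average of `b` over the cube of side
`4 |x - y|` centred at `x`, telescoping along dyadic cubes that shrink to `x`, respectively `y`. By
convexity each step is controlled by `osc^{1,1}` over one cube of the sequence, and the factors
`ℓ(I)^α` sum to a geometric series (`sum_oscE_diff_le`). The one-parameter converse then applies to
`b(x, ·) - b(y, ·)`.
-/

open MeasureTheory ENNReal Set

noncomputable section

/-- `Euc d` is the Euclidean space `ℝ^d`. -/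
abbrev Euc (d : ℕ) := EuclideanSpace ℝ (Fin d)

/-- An axis-parallel cube in `ℝ^d`, described by its center and positive side length. -/
structure Cube (d : ℕ) where
  center : Euc d
  side : ℝ
  side_pos : 0 < side

/-- The set of points of a cube. -/
def Cube.carrier {d : ℕ} (I : Cube d) : Set (Euc d) :=
  {x | ∀ i, |x i - I.center i| ≤ I.side / 2}

/-- The average `⟨b⟩_I` of a function over a cube. -/
def cubeAvg {d : ℕ} (b : Euc d → ℂ) (I : Cube d) : ℂ :=
  (volume I.carrier).toReal⁻¹ • ∫ x in I.carrier, b x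

/-- The homogeneous Hölder seminorm `‖b‖_{Ċ^{0,α}}`, valued in `[0,∞]`. -/
def holderSeminorm {d : ℕ} (α : ℝ) (b : Euc d → ℂ) : ℝ≥0∞ :=
  ⨆ (x : Euc d) (y : Euc d) (_ : x ≠ y), ENNReal.ofReal (‖b x - b y‖ / dist x y ^ α)
/-- The norm `‖b‖_{∙L^r}` = infimum over constants `c` of the `L^r` norm of `b - c`. -/
def dotLrNorm {d : ℕ} (r : ℝ) (b : Euc d → ℂ) : ℝ≥0∞ :=
  ⨅ c : ℂ, eLpNorm (fun x => b x - c) (ENNReal.ofReal r) volume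

/-- The BMO norm of `b`, valued in `[0,∞]`. -/
def bmoNorm {d : ℕ} (b : Euc d → ℂ) : ℝ≥0∞ :=
  ⨆ I : Cube d, ENNReal.ofReal ((volume I.carrier).toReal⁻¹ * ∫ x in I.carrier, ‖b x - cubeAvg b I‖)

/-- The sharp maximal function `M♯b`. -/
def sharpMaximal {d : ℕ} (b : Euc d → ℂ) (x : Euc d) : ℝ≥0∞ :=
  ⨆ (I : Cube d) (_ : x ∈ I.carrier),
    ENNReal.ofReal ((volume I.carrier).toReal⁻¹ * ∫ y in I.carrier, ‖b y - cubeAvg b I‖)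

/-- A (countable) collection of cubes is sparse if each cube `Q` carries a measurable subset
`E Q` of at least half its measure, these subsets being pairwise disjoint. -/
def IsSparse {d : ℕ} (𝒮 : Set (Cube d)) : Prop :=
  𝒮.Countable ∧ ∃ E : Cube d → Set (Euc d),
    (∀ Q ∈ 𝒮, MeasurableSet (E Q) ∧ E Q ⊆ Q.carrier ∧ volume Q.carrier ≤ 2 * volume (E Q)) ∧
    𝒮.PairwiseDisjoint E

/-- Average of `b (·, x2)` over a cube in the first factor. -/
def avgFst {d1 d2 : ℕ} (b : Euc d1 × Euc d2 → ℂ) (I1 : Cube d1) (x2 : Euc d2) : ℂ :=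
  (volume I1.carrier).toReal⁻¹ • ∫ y1 in I1.carrier, b (y1, x2)

/-- Average of `b (x1, ·)` over a cube in the second factor. -/
def avgSnd {d1 d2 : ℕ} (b : Euc d1 × Euc d2 → ℂ) (I2 : Cube d2) (x1 : Euc d1) : ℂ :=
  (volume I2.carrier).toReal⁻¹ • ∫ y2 in I2.carrier, b (x1, y2)

/-- Average of `b` over the rectangle `I1 × I2`. -/
def avgRect {d1 d2 : ℕ} (b : Euc d1 × Euc d2 → ℂ) (I1 : Cube d1) (I2 : Cube d2) : ℂ :=
  (volume (I1.carrier ×ˢ I2.carrier)).toReal⁻¹ • ∫ x in I1.carrier ×ˢ I2.carrier, b x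

/-- The bi-parameter oscillation `osc^{1,1}(b, I1 × I2)`. -/
def osc11 {d1 d2 : ℕ} (b : Euc d1 × Euc d2 → ℂ) (I1 : Cube d1) (I2 : Cube d2) : ℝ :=
  ∫ x in I1.carrier ×ˢ I2.carrier,
    ‖b x - avgFst b I1 x.2 - avgSnd b I2 x.1 + avgRect b I1 I2‖

/-- The `L^p` "norm" (with exponent `p ∈ [1,∞]`) of an `ℝ≥0∞`-valued function. -/
def lpNormENN {α : Type*} [MeasurableSpace α] (μ : Measure α) (p : ℝ≥0∞) (g : α → ℝ≥0∞) : ℝ≥0∞ :=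
  if p = ∞ then essSup g μ else (∫⁻ x, g x ^ p.toReal ∂μ) ^ (1 / p.toReal)

/-- The mixed norm `‖F‖_{L^{v1}_{x1} L^{v2}_{x2}}`. -/
def mixedNorm {d1 d2 : ℕ} {E : Type*} [NormedAddCommGroup E] (v1 v2 : ℝ≥0∞)
    (F : Euc d1 × Euc d2 → E) : ℝ≥0∞ :=
  lpNormENN volume v1 (fun x1 => lpNormENN volume v2 (fun x2 => (‖F (x1, x2)‖₊ : ℝ≥0∞)))

/-- The oscillation `osc^{v1,v2}(b, I1 × I2)` with general mixed exponents. -/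
def oscMixed {d1 d2 : ℕ} (v1 v2 : ℝ≥0∞) (b : Euc d1 × Euc d2 → ℂ)
    (I1 : Cube d1) (I2 : Cube d2) : ℝ≥0∞ :=
  mixedNorm v1 v2 ((I1.carrier ×ˢ I2.carrier).indicator
    (fun x => b x - avgFst b I1 x.2 - avgSnd b I2 x.1 + avgRect b I1 I2))

/-- A standard Calderón–Zygmund kernel on `ℝ^n` with exponent `α` and constant `CK`. -/
def IsCZKernel (n : ℕ) (α CK : ℝ) (K : Euc n → Euc n → ℂ) : Prop :=
  (∀ x y : Euc n, x ≠ y → ‖K x y‖ ≤ CK / dist x y ^ (n : ℝ)) ∧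
  (∀ x x' y : Euc n, x ≠ y → dist x x' ≤ dist x y / 2 →
    ‖K x y - K x' y‖ + ‖K y x - K y x'‖ ≤ CK * dist x x' ^ α / dist x y ^ ((n : ℝ) + α))

/-- Symmetric non-degeneracy of a kernel with constant `c₀`. -/
def SymNonDeg (n : ℕ) (c₀ : ℝ) (K : Euc n → Euc n → ℂ) : Prop :=
  ∀ (y : Euc n) (r : ℝ), 0 < r → ∃ x : Euc n, r ≤ dist x y ∧
    1 / (c₀ * r ^ (n : ℝ)) ≤ ‖K x y‖ ∧ 1 / (c₀ * r ^ (n : ℝ)) ≤ ‖K y x‖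

/-- Distance between two sets in a metric space. -/
def setDist {α : Type*} [PseudoMetricSpace α] (s t : Set α) : ℝ :=
  sInf (Set.image2 dist s t)

/-- An admissible configuration: the rectangles `J1 × J2` and `L1 × L2` have matching side
lengths in each parameter, and separation comparable to the common side length, with
comparability constants `c1 ≤ c2`. -/
def IsAdmissible {d1 d2 : ℕ} (c1 c2 : ℝ) (J1 L1 : Cube d1) (J2 L2 : Cube d2) : Prop :=
  J1.side = L1.side ∧ J2.side = L2.side ∧
  c1 * J1.side ≤ setDist J1.carrier L1.carrier ∧ setDist J1.carrier L1.carrier ≤ c2 * J1.side ∧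
  c1 * J2.side ≤ setDist J2.carrier L2.carrier ∧ setDist J2.carrier L2.carrier ≤ c2 * J2.side

/-- The difference `B(x,y) = b(x1,x2) − b(x1,y2) − b(y1,x2) + b(y1,y2)`. -/
def biB {d1 d2 : ℕ} (b : Euc d1 × Euc d2 → ℂ) (x y : Euc d1 × Euc d2) : ℂ :=
  b (x.1, x.2) - b (x.1, y.2) - b (y.1, x.2) + b (y.1, y.2)

/-- The bilinear form `Λ(f1, f2) = ∬ B(x,y) K1(x1,y1) K2(x2,y2) f1(y) f2(x) dy dx`. -/
def biCommForm {d1 d2 : ℕ} (b : Euc d1 × Euc d2 → ℂ) (K1 : Euc d1 → Euc d1 → ℂ)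
    (K2 : Euc d2 → Euc d2 → ℂ) (f1 f2 : Euc d1 × Euc d2 → ℂ) : ℂ :=
  ∫ x : Euc d1 × Euc d2, ∫ y : Euc d1 × Euc d2,
    biB b x y * K1 x.1 y.1 * K2 x.2 y.2 * f1 y * f2 x

/-! ### Geometry and measure of cubes -/

/-- The open cube with the same center and side as `I`. -/
def Cube.core {d : ℕ} (I : Cube d) : Set (Euc d) :=
  {x | ∀ i, |x i - I.center i| < I.side / 2}

theorem Cube.carrier_eq_preimage {d : ℕ} (I : Cube d) :
    I.carrier = (WithLp.ofLp : Euc d → (Fin d → ℝ)) ⁻¹'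
      Metric.closedBall (WithLp.ofLp I.center) (I.side / 2) := by
  ext x
  have h := I.side_pos
  simp only [Cube.carrier, mem_ofPred_eq, mem_preimage, Metric.mem_closedBall]
  rw [dist_pi_le_iff (by linarith)]
  simp [Real.dist_eq]

theorem Cube.core_eq_preimage {d : ℕ} (I : Cube d) :
    I.core = (WithLp.ofLp : Euc d → (Fin d → ℝ)) ⁻¹'
      Metric.ball (WithLp.ofLp I.center) (I.side / 2) := by
  ext x
  have h := I.side_pos
  simp only [Cube.core, mem_ofPred_eq, mem_preimage, Metric.mem_ball]
  rw [dist_pi_lt_iff (by linarith)]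
  simp [Real.dist_eq]

theorem Cube.core_subset {d : ℕ} (I : Cube d) : I.core ⊆ I.carrier :=
  fun _ hx i => (hx i).le

theorem Cube.isClosed_carrier {d : ℕ} (I : Cube d) : IsClosed I.carrier := by
  rw [I.carrier_eq_preimage]
  exact Metric.isClosed_closedBall.preimage (PiLp.continuous_ofLp 2 _)

theorem Cube.isOpen_core {d : ℕ} (I : Cube d) : IsOpen I.core := by
  rw [I.core_eq_preimage]
  exact Metric.isOpen_ball.preimage (PiLp.continuous_ofLp 2 _)

theorem Cube.measurableSet_carrier {d : ℕ} (I : Cube d) : MeasurableSet I.carrier :=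
  I.isClosed_carrier.measurableSet

theorem Cube.isCompact_carrier {d : ℕ} (I : Cube d) : IsCompact I.carrier := by
  rw [I.carrier_eq_preimage]
  exact (PiLp.homeomorph 2 (fun _ : Fin d => ℝ)).isCompact_preimage.2
    (isCompact_closedBall _ _)

theorem Cube.volume_carrier {d : ℕ} (I : Cube d) :
    volume I.carrier = ENNReal.ofReal (I.side ^ d) := by
  rw [I.carrier_eq_preimage,
    (PiLp.volume_preserving_ofLp (Fin d)).measure_preimage
      Metric.isClosed_closedBall.measurableSet.nullMeasurableSet,
    Real.volume_pi_closedBall _ (by linarith [I.side_pos])]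
  simp [mul_div_cancel₀]

theorem Cube.volume_core {d : ℕ} (I : Cube d) :
    volume I.core = ENNReal.ofReal (I.side ^ d) := by
  rw [I.core_eq_preimage,
    (PiLp.volume_preserving_ofLp (Fin d)).measure_preimage
      Metric.isOpen_ball.measurableSet.nullMeasurableSet,
    Real.volume_pi_ball _ (by linarith [I.side_pos])]
  simp [mul_div_cancel₀]

theorem Cube.volume_ne_zero {d : ℕ} (I : Cube d) : volume I.carrier ≠ 0 := by
  rw [I.volume_carrier]
  simpa using pow_pos I.side_pos d

theorem Cube.volume_ne_top {d : ℕ} (I : Cube d) : volume I.carrier ≠ ∞ := by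
  rw [I.volume_carrier]
  exact ENNReal.ofReal_ne_top

theorem Cube.volume_toReal_pos {d : ℕ} (I : Cube d) : 0 < (volume I.carrier).toReal :=
  ENNReal.toReal_pos I.volume_ne_zero I.volume_ne_top

theorem Cube.core_ae_eq {d : ℕ} (I : Cube d) : I.core =ᵐ[volume] I.carrier :=
  ae_eq_of_subset_of_measure_ge I.core_subset (by rw [I.volume_carrier, I.volume_core])
    I.isOpen_core.measurableSet.nullMeasurableSet I.volume_ne_top

theorem Cube.center_mem {d : ℕ} (I : Cube d) : I.center ∈ I.carrier := by
  intro i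
  simpa using (half_pos I.side_pos).le

theorem Cube.dist_le {d : ℕ} (I : Cube d) {x y : Euc d} (hx : x ∈ I.carrier)
    (hy : y ∈ I.carrier) : dist x y ≤ d * I.side := by
  have h1 : ∀ i, dist (x i) (y i) ≤ I.side := by
    intro i
    have := abs_sub_le (x i) (I.center i) (y i)
    rw [abs_sub_comm (I.center i)] at this
    rw [Real.dist_eq]
    linarith [hx i, hy i]
  have h3 : (0 : ℝ) ≤ d * I.side := mul_nonneg d.cast_nonneg I.side_pos.le
  rw [EuclideanSpace.dist_eq]
  apply Real.sqrt_le_iff.2 ⟨h3, ?_⟩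
  calc ∑ i, dist (x i) (y i) ^ 2 ≤ ∑ _i : Fin d, I.side ^ 2 :=
        Finset.sum_le_sum fun i _ => pow_le_pow_left₀ dist_nonneg (h1 i) 2
    _ = d * I.side ^ 2 := by simp
    _ ≤ (d * I.side) ^ 2 := by
        rw [mul_pow]
        refine mul_le_mul_of_nonneg_right ?_ (sq_nonneg _)
        rcases Nat.eq_zero_or_pos d with h | h
        · simp [h]
        · have : (1 : ℝ) ≤ d := by exact_mod_cast h
          nlinarith

theorem abs_coord_sub_le {d : ℕ} (x y : Euc d) (i : Fin d) : |x i - y i| ≤ dist x y := by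
  have := EuclideanSpace.norm_eq (x - y)
  rw [dist_eq_norm]
  simpa using PiLp.norm_apply_le (x - y) i

/-- The concentric dilate of `I` by the factor `5`. -/
def Cube.dilate5 {d : ℕ} (I : Cube d) : Cube d :=
  ⟨I.center, 5 * I.side, by linarith [I.side_pos]⟩

theorem Cube.volume_dilate5 {d : ℕ} (I : Cube d) :
    volume I.dilate5.carrier = 5 ^ d * volume I.carrier := by
  rw [Cube.volume_carrier, Cube.volume_carrier]
  simp only [Cube.dilate5, mul_pow]
  rw [ENNReal.ofReal_mul (by positivity), ENNReal.ofReal_pow (by norm_num)]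
  simp

theorem Cube.subset_dilate5 {d : ℕ} {I J : Cube d} (h : (I.carrier ∩ J.carrier).Nonempty)
    (hs : I.side ≤ 2 * J.side) : I.carrier ⊆ J.dilate5.carrier := by
  obtain ⟨z, hzI, hzJ⟩ := h
  intro x hx i
  have h1 := abs_le.1 (hx i)
  have h2 := abs_le.1 (hzI i)
  have h3 := abs_le.1 (hzJ i)
  simp only [Cube.dilate5]
  rw [abs_le]
  constructor <;> linarith

/-- The `2 ^ d` dyadic children of a cube, indexed by the side of the center in each
coordinate. -/
def Cube.child {d : ℕ} (I : Cube d) (σ : Fin d → Bool) : Cube d :=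
  ⟨WithLp.toLp 2 fun i => I.center i + (if σ i then I.side / 4 else -(I.side / 4)),
    I.side / 2, by linarith [I.side_pos]⟩

theorem Cube.child_center {d : ℕ} (I : Cube d) (σ : Fin d → Bool) (i : Fin d) :
    (I.child σ).center i = I.center i + (if σ i then I.side / 4 else -(I.side / 4)) := rfl

theorem Cube.child_side {d : ℕ} (I : Cube d) (σ : Fin d → Bool) :
    (I.child σ).side = I.side / 2 := rfl

theorem Cube.child_subset {d : ℕ} (I : Cube d) (σ : Fin d → Bool) :
    (I.child σ).carrier ⊆ I.carrier := by
  intro x hx i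
  have h1 := abs_le.1 (hx i)
  rw [I.child_center, I.child_side] at h1
  rw [abs_le]
  split_ifs at h1 <;> constructor <;> linarith [I.side_pos]

theorem Cube.child_core_subset {d : ℕ} (I : Cube d) (σ : Fin d → Bool) :
    (I.child σ).core ⊆ I.core := by
  intro x hx i
  have h1 := abs_lt.1 (hx i)
  rw [I.child_center, I.child_side] at h1
  rw [abs_lt]
  split_ifs at h1 <;> constructor <;> linarith [I.side_pos]

theorem Cube.iUnion_child {d : ℕ} (I : Cube d) :
    ⋃ σ, (I.child σ).carrier = I.carrier := by
  apply subset_antisymm (iUnion_subset fun σ => I.child_subset σ)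
  intro x hx
  refine mem_iUnion.2 ⟨fun i => decide (I.center i ≤ x i), fun i => ?_⟩
  have h1 := abs_le.1 (hx i)
  rw [I.child_center, I.child_side, abs_le]
  by_cases h : I.center i ≤ x i
  · simp only [h, decide_true, if_true]
    constructor <;> linarith
  · simp only [h, decide_false]
    constructor <;> simp <;> linarith

theorem Cube.child_core_disjoint {d : ℕ} (I : Cube d) {σ τ : Fin d → Bool} (h : σ ≠ τ) :
    Disjoint (I.child σ).core (I.child τ).carrier := by
  rw [Set.disjoint_left]
  intro x hx hy
  obtain ⟨i, hi⟩ := Function.ne_iff.1 h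
  have h1 := abs_lt.1 (hx i)
  have h2 := abs_le.1 (hy i)
  rw [I.child_center, I.child_side] at h1 h2
  cases hs : σ i <;> cases ht : τ i <;> simp [hs, ht] at h1 h2 hi <;> linarith

theorem Cube.volume_eq_child {d : ℕ} (I : Cube d) (σ : Fin d → Bool) :
    volume I.carrier = 2 ^ d * volume (I.child σ).carrier := by
  rw [Cube.volume_carrier, Cube.volume_carrier, I.child_side]
  have : I.side ^ d = 2 ^ d * (I.side / 2) ^ d := by
    rw [← mul_pow, mul_div_cancel₀ _ (by norm_num)]
  rw [this, ENNReal.ofReal_mul (by positivity), ENNReal.ofReal_pow (by norm_num)]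
  simp

theorem Cube.lintegral_child {d : ℕ} (I : Cube d) (φ : Euc d → ℝ≥0∞) :
    ∫⁻ x in I.carrier, φ x = ∑ σ, ∫⁻ x in (I.child σ).carrier, φ x := by
  rw [← I.iUnion_child, lintegral_iUnion₀ (fun σ => (Cube.measurableSet_carrier _).nullMeasurableSet),
    tsum_fintype]
  intro σ τ h
  have h1 : AEDisjoint volume (I.child σ).core (I.child τ).carrier :=
    (I.child_core_disjoint h).aedisjoint
  exact h1.congr (I.child σ).core_ae_eq.symm (ae_eq_refl _)

/-! ### The Carleson embedding for sparse families -/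

theorem IsSparse.mono {d : ℕ} {𝒮 𝒯 : Set (Cube d)} (h : IsSparse 𝒮) (hs : 𝒯 ⊆ 𝒮) :
    IsSparse 𝒯 := by
  obtain ⟨hc, E, hE, hd⟩ := h
  exact ⟨hc.mono hs, E, fun Q hQ => hE Q (hs hQ), hd.subset hs⟩

/-- Weak type bound: if `g` has average at least `t` over every cube of a finite sparse family,
the total measure of the family is controlled by the part of `g` above the level `t / 2`. The
disjoint sets attached to the family reduce this to the measure of the union of the cubes, for
which a Vitali selection is made. -/
theorem sparse_weak_type {d : ℕ} (T : Finset (Cube d)) (hT : IsSparse (T : Set (Cube d)))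
    {g : Euc d → ℝ≥0∞} (hg : Measurable g) {t : ℝ≥0∞} (htop : t ≠ ∞)
    (h : ∀ S ∈ T, t * volume S.carrier ≤ ∫⁻ x in S.carrier, g x) :
    t * ∑ S ∈ T, volume S.carrier ≤ 4 * 5 ^ d * ∫⁻ x in {x | t < 2 * g x}, g x := by
  classical
  obtain ⟨-, E, hE, hdisj⟩ := hT
  obtain ⟨u, huT, hud, hucov⟩ := Vitali.exists_disjoint_subfamily_covering_enlargement
    (fun S : Cube d => S.carrier) (T : Set (Cube d)) Cube.side 2 (by norm_num)
    (fun S _ => S.side_pos.le) (∑ S ∈ T, S.side)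
    (fun S hS => Finset.single_le_sum (f := Cube.side) (fun Q _ => Q.side_pos.le) hS)
    (fun S _ => ⟨_, S.center_mem⟩)
  have hufin : u.Finite := T.finite_toSet.subset huT
  set U : Finset (Cube d) := hufin.toFinset with hU
  have hmemU : ∀ S, S ∈ U ↔ S ∈ u := fun S => by simp [hU]
  have hAm : MeasurableSet {x | t < 2 * g x} :=
    measurableSet_lt measurable_const (hg.const_mul 2)
  have h1 : ∑ S ∈ T, volume S.carrier ≤ 2 * (5 ^ d * ∑ S ∈ U, volume S.carrier) := by
    calc ∑ S ∈ T, volume S.carrier ≤ ∑ S ∈ T, 2 * volume (E S) :=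
          Finset.sum_le_sum fun S hS => (hE S hS).2.2
      _ = 2 * volume (⋃ S ∈ T, E S) := by
          rw [← Finset.mul_sum, measure_biUnion_finset hdisj (fun S hS => (hE S hS).1)]
      _ ≤ 2 * volume (⋃ S ∈ U, S.dilate5.carrier) := by
          gcongr 2 * volume ?_
          refine iUnion₂_subset fun S hS => ?_
          obtain ⟨Q, hQ, hSQ, hside⟩ := hucov S hS
          refine ((hE S hS).2.1.trans (Cube.subset_dilate5 hSQ hside)).trans ?_
          exact subset_biUnion_of_mem (u := fun S : Cube d => S.dilate5.carrier) ((hmemU Q).2 hQ)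
      _ ≤ 2 * ∑ S ∈ U, volume S.dilate5.carrier := by
          gcongr
          exact measure_biUnion_finset_le _ _
      _ = 2 * (5 ^ d * ∑ S ∈ U, volume S.carrier) := by
          simp only [Cube.volume_dilate5, Finset.mul_sum]
  have h2 : ∀ S ∈ U, t * volume S.carrier ≤
      2 * ∫⁻ x in S.carrier, {x | t < 2 * g x}.indicator g x := by
    intro S hS
    have hST : S ∈ T := huT ((hmemU S).1 hS)
    have h3 : 2 * ∫⁻ x in S.carrier, g x ≤
        2 * (∫⁻ x in S.carrier, {x | t < 2 * g x}.indicator g x) + t * volume S.carrier := by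
      rw [← lintegral_const_mul _ hg, ← lintegral_const_mul _ (hg.indicator hAm),
        ← setLIntegral_const, ← lintegral_add_right _ measurable_const]
      refine lintegral_mono fun x => ?_
      by_cases hx : t < 2 * g x
      · rw [indicator_of_mem (show x ∈ {x | t < 2 * g x} from hx)]
        exact le_self_add
      · rw [indicator_of_notMem (show x ∉ {x | t < 2 * g x} from hx)]
        simpa using not_lt.1 hx
    have h4 : t * volume S.carrier + t * volume S.carrier ≤ 2 * ∫⁻ x in S.carrier, g x := by
      rw [← two_mul]
      gcongr
      exact h S hST
    exact (ENNReal.add_le_add_iff_right (ENNReal.mul_ne_top htop S.volume_ne_top)).1 (h4.trans h3)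
  calc t * ∑ S ∈ T, volume S.carrier
      ≤ t * (2 * (5 ^ d * ∑ S ∈ U, volume S.carrier)) := by gcongr
    _ = 2 * 5 ^ d * ∑ S ∈ U, t * volume S.carrier := by
        rw [← Finset.mul_sum]; ring
    _ ≤ 2 * 5 ^ d * ∑ S ∈ U, 2 * ∫⁻ x in S.carrier, {x | t < 2 * g x}.indicator g x := by
        gcongr 2 * 5 ^ d * ?_
        exact Finset.sum_le_sum h2
    _ = 4 * 5 ^ d * ∫⁻ x in ⋃ S ∈ U, S.carrier, {x | t < 2 * g x}.indicator g x := by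
        rw [lintegral_biUnion_finset _ (fun S _ => S.measurableSet_carrier), ← Finset.mul_sum]
        · ring
        · intro S hS Q hQ hne
          exact hud ((hmemU S).1 hS) ((hmemU Q).1 hQ) hne
    _ ≤ 4 * 5 ^ d * ∫⁻ x, {x | t < 2 * g x}.indicator g x := by
        gcongr
        exact Measure.restrict_le_self
    _ = 4 * 5 ^ d * ∫⁻ x in {x | t < 2 * g x}, g x := by
        rw [lintegral_indicator hAm]

/-- The layer cake formula for the power function. -/
theorem lintegral_rpow_layer {q : ℝ} (hq : 0 < q) {w : ℝ} (hw : 0 ≤ w) :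
    ∫⁻ t in Ioi (0 : ℝ), (if t < w then ENNReal.ofReal (t ^ (q - 1)) else 0) =
      ENNReal.ofReal (w ^ q / q) := by
  have h1 : ∀ t : ℝ, (if t < w then ENNReal.ofReal (t ^ (q - 1)) else 0) =
      (Iio w).indicator (fun t => ENNReal.ofReal (t ^ (q - 1))) t := by
    intro t
    simp [indicator]
  simp only [h1]
  rw [lintegral_indicator measurableSet_Iio, Measure.restrict_restrict measurableSet_Iio,
    inter_comm, Ioi_inter_Iio, Measure.restrict_congr_set Ioo_ae_eq_Ioc,
    ← ofReal_integral_eq_lintegral_ofReal,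
    ← intervalIntegral.integral_of_le hw, integral_rpow (Or.inl (by linarith))]
  · simp [hq.ne']
  · have := intervalIntegral.intervalIntegrable_rpow' (a := 0) (b := w) (r := q - 1) (by linarith)
    rwa [intervalIntegrable_iff_integrableOn_Ioc_of_le hw] at this
  · filter_upwards [ae_restrict_mem measurableSet_Ioc] with t ht
    exact Real.rpow_nonneg ht.1.le _

/-- **Carleson embedding**: the `p`-th powers of the averages of `g` over a finite sparse
family, weighted by the measures of the cubes, are controlled by `∫ g ^ p`. It follows by integrating `sparse_weak_type` over all levels. -/
theorem carleson_embedding {d : ℕ} {p : ℝ} (hp : 1 < p) (T : Finset (Cube d))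
    (hT : IsSparse (T : Set (Cube d))) {g : Euc d → ℝ≥0∞} (hg : Measurable g) :
    ∑ S ∈ T, volume S.carrier * ((volume S.carrier)⁻¹ * ∫⁻ x in S.carrier, g x) ^ p ≤
      ENNReal.ofReal (4 * 5 ^ d * p * 2 ^ (p - 1) / (p - 1)) * ∫⁻ x, g x ^ p := by
  classical
  have hp0 : 0 < p := by linarith
  have hp1 : 0 < p - 1 := by linarith
  have hK : 0 < 4 * 5 ^ d * p * 2 ^ (p - 1) / (p - 1) := by positivity
  by_cases hfin : ∫⁻ x, g x ^ p = ∞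
  · rw [hfin, ENNReal.mul_top (by simpa using hK)]
    exact le_top
  -- the averages are finite, so they may be treated as real numbers
  have hfint : ∀ S : Cube d, ∫⁻ x in S.carrier, g x ≠ ∞ := by
    intro S
    have : ∫⁻ x in S.carrier, g x ≤ volume S.carrier + ∫⁻ x, g x ^ p := by
      calc ∫⁻ x in S.carrier, g x ≤ ∫⁻ x in S.carrier, (1 + g x ^ p) := by
            refine lintegral_mono fun x => ?_
            rcases le_total (g x) 1 with h | h
            · exact h.trans le_self_add
            · calc g x = g x ^ (1 : ℝ) := (ENNReal.rpow_one _).symm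
                _ ≤ g x ^ p := ENNReal.rpow_le_rpow_of_exponent_le h hp.le
                _ ≤ _ := le_add_self
        _ = volume S.carrier + ∫⁻ x in S.carrier, g x ^ p := by
            rw [lintegral_add_left measurable_const]; simp
        _ ≤ _ := by
            gcongr
            exact Measure.restrict_le_self
    exact ne_top_of_le_ne_top (ENNReal.add_ne_top.2 ⟨S.volume_ne_top, hfin⟩) this
  set w : Cube d → ℝ := fun S => ((volume S.carrier)⁻¹ * ∫⁻ x in S.carrier, g x).toReal with hw
  have hw0 : ∀ S, 0 ≤ w S := fun S => ENNReal.toReal_nonneg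
  have hwE : ∀ S, ENNReal.ofReal (w S) = (volume S.carrier)⁻¹ * ∫⁻ x in S.carrier, g x :=
    fun S => ENNReal.ofReal_toReal
      (ENNReal.mul_ne_top (ENNReal.inv_ne_top.2 S.volume_ne_zero) (hfint S))
  have hpow : ∀ S, ((volume S.carrier)⁻¹ * ∫⁻ x in S.carrier, g x) ^ p =
      ENNReal.ofReal p *
        ∫⁻ t in Ioi (0 : ℝ), (if t < w S then ENNReal.ofReal (t ^ (p - 1)) else 0) := by
    intro S
    rw [← hwE, lintegral_rpow_layer hp0 (hw0 S), ← ENNReal.ofReal_mul hp0.le,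
      ENNReal.ofReal_rpow_of_nonneg (hw0 S) hp0.le, mul_div_cancel₀ _ hp0.ne']
  have hmeas : ∀ S : Cube d, Measurable
      (fun t : ℝ => (if t < w S then ENNReal.ofReal (t ^ (p - 1)) else 0)) := by
    intro S
    exact Measurable.ite measurableSet_Iio (by fun_prop) measurable_const
  have hlevel : ∀ t ∈ Ioi (0 : ℝ),
      ∑ S ∈ T, volume S.carrier * (if t < w S then ENNReal.ofReal (t ^ (p - 1)) else 0) ≤
      4 * 5 ^ d * ∫⁻ x, (if ENNReal.ofReal t < 2 * g x then
        ENNReal.ofReal (t ^ (p - 1 - 1)) * g x else 0) := by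
    intro t ht
    have ht0 : 0 < t := ht
    have hAm : MeasurableSet {x | ENNReal.ofReal t < 2 * g x} :=
      measurableSet_lt measurable_const (hg.const_mul 2)
    have h1 := sparse_weak_type (T.filter fun S => t < w S)
      (hT.mono (Finset.coe_subset.2 (Finset.filter_subset _ _))) hg
      (t := ENNReal.ofReal t) ENNReal.ofReal_ne_top (by
        intro S hS
        have h2 := (Finset.mem_filter.1 hS).2
        calc ENNReal.ofReal t * volume S.carrier ≤ ENNReal.ofReal (w S) * volume S.carrier := by
              gcongr
          _ = ∫⁻ x in S.carrier, g x := by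
              rw [hwE, mul_right_comm, ENNReal.inv_mul_cancel S.volume_ne_zero S.volume_ne_top,
                one_mul])
    have h3 : ENNReal.ofReal (t ^ (p - 1)) = ENNReal.ofReal (t ^ (p - 1 - 1)) * ENNReal.ofReal t := by
      rw [← ENNReal.ofReal_mul (by positivity), ← Real.rpow_add_one ht0.ne']
      congr 2; ring
    calc ∑ S ∈ T, volume S.carrier * (if t < w S then ENNReal.ofReal (t ^ (p - 1)) else 0)
        = ENNReal.ofReal (t ^ (p - 1 - 1)) *
          (ENNReal.ofReal t * ∑ S ∈ T.filter (fun S => t < w S), volume S.carrier) := by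
          rw [← mul_assoc, ← h3, Finset.mul_sum, Finset.sum_filter]
          refine Finset.sum_congr rfl fun S _ => ?_
          split_ifs
          · rw [mul_comm]
          · simp
      _ ≤ ENNReal.ofReal (t ^ (p - 1 - 1)) *
          (4 * 5 ^ d * ∫⁻ x in {x | ENNReal.ofReal t < 2 * g x}, g x) := by gcongr
      _ = 4 * 5 ^ d * ∫⁻ x in {x | ENNReal.ofReal t < 2 * g x},
            ENNReal.ofReal (t ^ (p - 1 - 1)) * g x := by
          rw [lintegral_const_mul _ hg]; ring
      _ = _ := by
          rw [← lintegral_indicator hAm]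
          congr 1
          refine lintegral_congr fun x => ?_
          by_cases h : ENNReal.ofReal t < 2 * g x <;> simp [h]
  have hjoint : Measurable (Function.uncurry fun (t : ℝ) (x : Euc d) =>
      (if ENNReal.ofReal t < 2 * g x then ENNReal.ofReal (t ^ (p - 1 - 1)) * g x else 0)) := by
    refine Measurable.ite ?_ ?_ measurable_const
    · exact measurableSet_lt (by fun_prop) (by fun_prop)
    · fun_prop
  have hinner : ∀ x, ∫⁻ t in Ioi (0 : ℝ), (if ENNReal.ofReal t < 2 * g x then
        ENNReal.ofReal (t ^ (p - 1 - 1)) * g x else 0) ≤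
      ENNReal.ofReal (2 ^ (p - 1) / (p - 1)) * g x ^ p := by
    intro x
    have hc : 0 < 2 ^ (p - 1) / (p - 1) := by positivity
    by_cases hx : g x = ∞
    · have h0 : ENNReal.ofReal (2 ^ (p - 1) / (p - 1)) * g x ^ p = ∞ := by
        rw [hx, ENNReal.top_rpow_of_pos hp0, ENNReal.mul_top (ENNReal.ofReal_pos.2 hc).ne']
      rw [h0]
      exact le_top
    lift g x to NNReal using hx with y
    have h1 : ∀ t ∈ Ioi (0 : ℝ), (if ENNReal.ofReal t < 2 * (y : ℝ≥0∞) then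
        ENNReal.ofReal (t ^ (p - 1 - 1)) * (y : ℝ≥0∞) else 0) =
        (if t < 2 * (y : ℝ) then ENNReal.ofReal (t ^ (p - 1 - 1)) else 0) * (y : ℝ≥0∞) := by
      intro t ht
      have h2 : (2 * (y : ℝ≥0∞)) = ENNReal.ofReal (2 * (y : ℝ)) := by
        rw [ENNReal.ofReal_mul (by norm_num)]; simp
      have h3 : ENNReal.ofReal t < 2 * (y : ℝ≥0∞) ↔ t < 2 * (y : ℝ) := by
        rw [h2, ENNReal.ofReal_lt_ofReal_iff_of_nonneg (le_of_lt ht)]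
      simp only [h3, ite_mul, zero_mul]
    rw [setLIntegral_congr_fun measurableSet_Ioi h1, lintegral_mul_const' _ _ ENNReal.coe_ne_top,
      lintegral_rpow_layer hp1 (by positivity)]
    apply le_of_eq
    have h5 : ((y : ℝ≥0∞)) = ENNReal.ofReal (y : ℝ) := by simp
    rw [h5, ENNReal.ofReal_rpow_of_nonneg (NNReal.coe_nonneg y) hp0.le, ← ENNReal.ofReal_mul (by positivity),
      ← ENNReal.ofReal_mul (by positivity)]
    congr 1
    rw [Real.mul_rpow (by norm_num) (NNReal.coe_nonneg y)]
    have h6 : (y : ℝ) ^ p = (y : ℝ) ^ (p - 1) * y := by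
      rcases eq_or_lt_of_le (show (0 : ℝ) ≤ y from NNReal.coe_nonneg y) with h | h
      · rw [← h, Real.zero_rpow hp0.ne', mul_zero]
      · rw [← Real.rpow_add_one h.ne']; congr 1; ring
    rw [h6]; ring
  calc ∑ S ∈ T, volume S.carrier * ((volume S.carrier)⁻¹ * ∫⁻ x in S.carrier, g x) ^ p
      = ENNReal.ofReal p * ∫⁻ t in Ioi (0 : ℝ), ∑ S ∈ T,
          volume S.carrier * (if t < w S then ENNReal.ofReal (t ^ (p - 1)) else 0) := by
        rw [lintegral_finsetSum _ (fun S _ => (hmeas S).const_mul _), Finset.mul_sum]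
        refine Finset.sum_congr rfl fun S _ => ?_
        rw [hpow, lintegral_const_mul _ (hmeas S)]
        ring
    _ ≤ ENNReal.ofReal p * ∫⁻ t in Ioi (0 : ℝ), 4 * 5 ^ d *
          ∫⁻ x, (if ENNReal.ofReal t < 2 * g x then
            ENNReal.ofReal (t ^ (p - 1 - 1)) * g x else 0) := by
        gcongr ENNReal.ofReal p * ?_
        exact setLIntegral_mono' measurableSet_Ioi hlevel
    _ = ENNReal.ofReal p * (4 * 5 ^ d * ∫⁻ x, ∫⁻ t in Ioi (0 : ℝ),
          (if ENNReal.ofReal t < 2 * g x then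
            ENNReal.ofReal (t ^ (p - 1 - 1)) * g x else 0)) := by
        rw [lintegral_const_mul' _ _ (by finiteness),
          lintegral_lintegral_swap hjoint.aemeasurable]
    _ ≤ ENNReal.ofReal p * (4 * 5 ^ d * ∫⁻ x,
          ENNReal.ofReal (2 ^ (p - 1) / (p - 1)) * g x ^ p) := by
        gcongr with x
        exact hinner x
    _ = _ := by
        rw [lintegral_const_mul _ (hg.pow_const p)]
        have h7 : (4 * 5 ^ d : ℝ≥0∞) = ENNReal.ofReal (4 * 5 ^ d) := by
          rw [ENNReal.ofReal_mul (by norm_num), ENNReal.ofReal_pow (by norm_num)]; simp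
        rw [h7, ← mul_assoc, ← mul_assoc, ← ENNReal.ofReal_mul hp0.le,
          ← ENNReal.ofReal_mul (by positivity)]
        congr 2; ring

/-! ### Oscillation over a cube -/

/-- The unnormalized oscillation `∫_S |f - ⟨f⟩_S|`, as an extended nonnegative number. -/
def oscE {d : ℕ} (f : Euc d → ℂ) (S : Cube d) : ℝ≥0∞ :=
  ∫⁻ x in S.carrier, ‖f x - cubeAvg f S‖ₑ

theorem integrableOn_cube {d : ℕ} {f : Euc d → ℂ} (hf : Continuous f) (S : Cube d) :
    IntegrableOn f S.carrier :=
  hf.continuousOn.integrableOn_compact S.isCompact_carrier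

theorem cubeAvg_sub {d : ℕ} {f g : Euc d → ℂ} (hf : Continuous f) (hg : Continuous g)
    (S : Cube d) : cubeAvg (fun x => f x - g x) S = cubeAvg f S - cubeAvg g S := by
  rw [cubeAvg, integral_sub (integrableOn_cube hf S) (integrableOn_cube hg S), smul_sub]
  rfl

theorem cubeAvg_const {d : ℕ} (c : ℂ) (S : Cube d) : cubeAvg (fun _ => c) S = c := by
  rw [cubeAvg, setIntegral_const, Measure.real, smul_smul,
    inv_mul_cancel₀ S.volume_toReal_pos.ne', one_smul]

theorem enorm_inv_volume {d : ℕ} (S : Cube d) :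
    ‖(volume S.carrier).toReal⁻¹‖ₑ = (volume S.carrier)⁻¹ := by
  rw [Real.enorm_eq_ofReal (inv_nonneg.2 ENNReal.toReal_nonneg),
    ENNReal.ofReal_inv_of_pos S.volume_toReal_pos, ENNReal.ofReal_toReal S.volume_ne_top]

theorem enorm_cubeAvg_le {d : ℕ} (f : Euc d → ℂ) (S : Cube d) :
    ‖cubeAvg f S‖ₑ ≤ (volume S.carrier)⁻¹ * ∫⁻ x in S.carrier, ‖f x‖ₑ := by
  rw [cubeAvg, enorm_smul, enorm_inv_volume]
  gcongr
  exact enorm_integral_le_lintegral_enorm _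

theorem enorm_cubeAvg_sub_le {d : ℕ} {f : Euc d → ℂ} (hf : Continuous f) (S : Cube d) (c : ℂ) :
    ‖cubeAvg f S - c‖ₑ ≤ (volume S.carrier)⁻¹ * ∫⁻ x in S.carrier, ‖f x - c‖ₑ := by
  have h := enorm_cubeAvg_le (fun x => f x - c) S
  rwa [cubeAvg_sub hf continuous_const, cubeAvg_const] at h

theorem oscE_ne_top {d : ℕ} {f : Euc d → ℂ} (hf : Continuous f) (S : Cube d) :
    oscE f S ≠ ∞ := by
  have h := (integrableOn_cube (hf.sub continuous_const : Continuous fun x => f x - cubeAvg f S) S)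
  exact h.2.ne

theorem oscE_le_two_mul {d : ℕ} {f : Euc d → ℂ} (hf : Continuous f) (S : Cube d) (c : ℂ) :
    oscE f S ≤ 2 * ∫⁻ x in S.carrier, ‖f x - c‖ₑ := by
  calc oscE f S ≤ ∫⁻ x in S.carrier, (‖f x - c‖ₑ + ‖cubeAvg f S - c‖ₑ) := by
        refine lintegral_mono fun x => ?_
        have : f x - cubeAvg f S = (f x - c) - (cubeAvg f S - c) := by ring
        rw [this]
        exact enorm_sub_le
    _ = (∫⁻ x in S.carrier, ‖f x - c‖ₑ) + ‖cubeAvg f S - c‖ₑ * volume S.carrier := by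
        rw [lintegral_add_right _ measurable_const, setLIntegral_const]
    _ ≤ (∫⁻ x in S.carrier, ‖f x - c‖ₑ) +
          ((volume S.carrier)⁻¹ * ∫⁻ x in S.carrier, ‖f x - c‖ₑ) * volume S.carrier := by
        gcongr
        exact enorm_cubeAvg_sub_le hf S c
    _ = 2 * ∫⁻ x in S.carrier, ‖f x - c‖ₑ := by
        rw [mul_right_comm, ENNReal.inv_mul_cancel S.volume_ne_zero S.volume_ne_top, one_mul,
          two_mul]

theorem oscE_sub_le {d : ℕ} {f g : Euc d → ℂ} (hf : Continuous f) (hg : Continuous g)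
    (S : Cube d) : oscE (fun x => f x - g x) S ≤ oscE f S + oscE g S := by
  rw [oscE, oscE, oscE, ← lintegral_add_left (by fun_prop)]
  refine lintegral_mono fun x => ?_
  rw [cubeAvg_sub hf hg]
  have : f x - g x - (cubeAvg f S - cubeAvg g S) =
    (f x - cubeAvg f S) - (g x - cubeAvg g S) := by ring
  rw [this]
  exact enorm_sub_le

/-- Weighted sums of oscillations over a sparse family are dominated by the `L^r` norm modulo
constants: Hölder's inequality followed by the Carleson embedding. -/
theorem sum_oscE_le_eLpNorm {d : ℕ} {r r' : ℝ} (hrr : r.HolderConjugate r')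
    (T : Finset (Cube d)) (hT : IsSparse (T : Set (Cube d))) (lam : Cube d → ℝ≥0∞)
    (hlam : ∑ S ∈ T, volume S.carrier * lam S ^ r' ≤ 1) {f : Euc d → ℂ} (hf : Continuous f)
    (c : ℂ) :
    ∑ S ∈ T, lam S * oscE f S ≤
      2 * ENNReal.ofReal (4 * 5 ^ d * r * 2 ^ (r - 1) / (r - 1)) ^ (1 / r) *
        eLpNorm (fun x => f x - c) (ENNReal.ofReal r) volume := by
  have hr := hrr.lt
  have hr0 := hrr.pos
  have hr'0 := hrr.symm.pos
  set g : Euc d → ℝ≥0∞ := fun x => ‖f x - c‖ₑ with hgdef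
  have hg : Measurable g := by fun_prop
  have hL : eLpNorm (fun x => f x - c) (ENNReal.ofReal r) volume =
      (∫⁻ x, g x ^ r) ^ (1 / r) := by
    rw [eLpNorm_eq_lintegral_rpow_enorm_toReal (by simpa using hr0) ENNReal.ofReal_ne_top,
      ENNReal.toReal_ofReal hr0.le]
  have hsplit : ∀ S : Cube d, volume S.carrier =
      volume S.carrier ^ (1 / r') * volume S.carrier ^ (1 / r) := by
    intro S
    rw [← ENNReal.rpow_add _ _ S.volume_ne_zero S.volume_ne_top, one_div, one_div,
      hrr.symm.inv_add_inv_eq_one, ENNReal.rpow_one]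
  calc ∑ S ∈ T, lam S * oscE f S
      ≤ ∑ S ∈ T, 2 * ((volume S.carrier ^ (1 / r') * lam S) * (volume S.carrier ^ (1 / r) *
          ((volume S.carrier)⁻¹ * ∫⁻ x in S.carrier, g x))) := by
        refine Finset.sum_le_sum fun S _ => ?_
        calc lam S * oscE f S ≤ lam S * (2 * ∫⁻ x in S.carrier, g x) := by
              gcongr
              exact oscE_le_two_mul hf S c
          _ = 2 * (lam S * ((volume S.carrier * (volume S.carrier)⁻¹) *
                ∫⁻ x in S.carrier, g x)) := by
              rw [ENNReal.mul_inv_cancel S.volume_ne_zero S.volume_ne_top]; ring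
          _ = 2 * (lam S * (((volume S.carrier ^ (1 / r') * volume S.carrier ^ (1 / r)) *
                (volume S.carrier)⁻¹) * ∫⁻ x in S.carrier, g x)) := by
              rw [← hsplit]
          _ = _ := by ring
    _ ≤ 2 * ((∑ S ∈ T, (volume S.carrier ^ (1 / r') * lam S) ^ r') ^ (1 / r') *
          (∑ S ∈ T, (volume S.carrier ^ (1 / r) *
            ((volume S.carrier)⁻¹ * ∫⁻ x in S.carrier, g x)) ^ r) ^ (1 / r)) := by
        rw [← Finset.mul_sum]
        gcongr
        exact ENNReal.inner_le_Lp_mul_Lq T _ _ hrr.symm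
    _ = 2 * ((∑ S ∈ T, volume S.carrier * lam S ^ r') ^ (1 / r') *
          (∑ S ∈ T, volume S.carrier *
            ((volume S.carrier)⁻¹ * ∫⁻ x in S.carrier, g x) ^ r) ^ (1 / r)) := by
        simp only [ENNReal.mul_rpow_of_nonneg _ _ hr0.le, ENNReal.mul_rpow_of_nonneg _ _ hr'0.le,
          ← ENNReal.rpow_mul, one_div, inv_mul_cancel₀ hr0.ne', inv_mul_cancel₀ hr'0.ne',
          ENNReal.rpow_one]
    _ ≤ 2 * (1 ^ (1 / r') *
          (ENNReal.ofReal (4 * 5 ^ d * r * 2 ^ (r - 1) / (r - 1)) * ∫⁻ x, g x ^ r) ^ (1 / r)) := by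
        gcongr
        exact carleson_embedding hr T hT hg
    _ = _ := by
        rw [ENNReal.one_rpow, one_mul, hL, ENNReal.mul_rpow_of_nonneg _ _ (by positivity),
          ← mul_assoc]

/-! ### Sparse domination of a continuous function on a cube -/

/-- A finite family `T` of subcubes of `P` with side at most `ℓ`, together with pairwise disjoint
sets `E S ⊆ S` in the open cube of `P` that occupy at least half of `S`. -/
structure SparseIn {d : ℕ} (P : Cube d) (ℓ : ℝ) (T : Finset (Cube d))
    (E : Cube d → Set (Euc d)) : Prop where
  meas : ∀ S ∈ T, MeasurableSet (E S)
  sub : ∀ S ∈ T, E S ⊆ S.carrier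
  half : ∀ S ∈ T, volume S.carrier ≤ 2 * volume (E S)
  subP : ∀ S ∈ T, S.carrier ⊆ P.carrier
  core : ∀ S ∈ T, E S ⊆ P.core
  side : ∀ S ∈ T, S.side ≤ ℓ
  disj : (T : Set (Cube d)).PairwiseDisjoint E

theorem SparseIn.isSparse {d : ℕ} {P : Cube d} {ℓ : ℝ} {T : Finset (Cube d)}
    {E : Cube d → Set (Euc d)} (h : SparseIn P ℓ T E) : IsSparse (T : Set (Cube d)) :=
  ⟨T.countable_toSet, E, fun Q hQ => ⟨h.meas Q hQ, h.sub Q hQ, h.half Q hQ⟩, h.disj⟩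

theorem SparseIn.nonempty {d : ℕ} {P : Cube d} {ℓ : ℝ} {T : Finset (Cube d)}
    {E : Cube d → Set (Euc d)} (h : SparseIn P ℓ T E) {S : Cube d} (hS : S ∈ T) :
    (E S).Nonempty := by
  rw [nonempty_iff_ne_empty]
  intro h0
  have := h.half S hS
  rw [h0, measure_empty, mul_zero] at this
  exact S.volume_ne_zero (le_antisymm this bot_le)

/-- Families living in the different dyadic children of `P` combine to a family in `P`. -/
theorem SparseIn.union {d : ℕ} {P : Cube d} {ℓ : ℝ}
    {T : (Fin d → Bool) → Finset (Cube d)} {E : (Fin d → Bool) → Cube d → Set (Euc d)}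
    (h : ∀ σ, SparseIn (P.child σ) ℓ (T σ) (E σ)) :
    ∃ (T' : Finset (Cube d)) (E' : Cube d → Set (Euc d)), SparseIn P ℓ T' E' ∧
      (∀ S, S ∈ T' ↔ ∃ σ, S ∈ T σ) ∧
      ∀ F : Cube d → ℝ≥0∞, ∑ S ∈ T', F S = ∑ σ, ∑ S ∈ T σ, F S := by
  classical
  have hmem : ∀ S, S ∈ Finset.univ.biUnion T ↔ ∃ σ, S ∈ T σ := by simp
  refine ⟨Finset.univ.biUnion T, fun S => ⋃ σ, ⋃ (_ : S ∈ T σ), E σ S, ⟨?_, ?_, ?_, ?_, ?_, ?_, ?_⟩,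
    hmem, ?_⟩
  · exact fun S _ => MeasurableSet.iUnion fun σ => MeasurableSet.iUnion fun hS => (h σ).meas S hS
  · exact fun S _ => iUnion_subset fun σ => iUnion_subset fun hS => (h σ).sub S hS
  · intro S hS
    obtain ⟨σ, hσ⟩ := (hmem S).1 hS
    refine ((h σ).half S hσ).trans ?_
    gcongr
    exact subset_iUnion_of_subset σ (subset_iUnion_of_subset hσ subset_rfl)
  · intro S hS
    obtain ⟨σ, hσ⟩ := (hmem S).1 hS
    exact ((h σ).subP S hσ).trans (P.child_subset σ)
  · exact fun S _ => iUnion_subset fun σ => iUnion_subset fun hS =>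
      ((h σ).core S hS).trans (P.child_core_subset σ)
  · intro S hS
    obtain ⟨σ, hσ⟩ := (hmem S).1 hS
    exact (h σ).side S hσ
  · intro S _ Q _ hne
    simp only [Function.onFun, disjoint_iUnion_left, disjoint_iUnion_right]
    intro σ hσ τ hτ
    by_cases hστ : σ = τ
    · subst hστ
      exact (h σ).disj hτ hσ hne
    · exact (P.child_core_disjoint (Ne.symm hστ)).mono ((h τ).core _ hτ)
        (((h σ).core _ hσ).trans (Cube.core_subset _))
  · intro F
    refine Finset.sum_biUnion ?_
    intro σ _ τ _ hne
    rw [Function.onFun, Finset.disjoint_left]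
    intro S hσ hτ
    obtain ⟨x, hx⟩ := (h σ).nonempty hσ
    exact Set.disjoint_left.1 (P.child_core_disjoint hne) ((h σ).core S hσ hx)
      ((h τ).subP S hτ ((h σ).sub S hσ hx))

/-- The weighted sum dominating `f` on a cube in sparse domination, tested against `g`. -/
def sparseForm {d : ℕ} (f : Euc d → ℂ) (g : Euc d → ℝ≥0∞) (T : Finset (Cube d)) : ℝ≥0∞ :=
  ∑ S ∈ T, (volume S.carrier)⁻¹ * oscE f S * ∫⁻ x in S.carrier, g x

/-- Suppose that, for all constants `c` and thresholds `t`, `f - c` is dominated on `P` using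
stopping cubes whose union has measure at most `t⁻¹ ∫_P |f - c|`. For `c = ⟨f⟩_P` and `t` twice the
average oscillation of `f` on `P`, the stopping cubes fill at most half of `P`, so adding `P` keeps
the family sparse, and the term of `P` in the sparse form absorbs the main term. -/
theorem stopping_step {d : ℕ} {f : Euc d → ℂ} (hf : Continuous f) (ε : ℝ≥0∞) (P : Cube d)
    (IH : ∀ (c : ℂ) (t : ℝ≥0∞), t ≠ ∞ →
      ∫⁻ x in P.carrier, ‖f x - c‖ₑ ≤ t * volume P.carrier →
      ∃ (T : Finset (Cube d)) (E : Cube d → Set (Euc d)), SparseIn P (P.side / 2) T E ∧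
        t * volume (⋃ S ∈ T, S.carrier) ≤ ∫⁻ x in P.carrier, ‖f x - c‖ₑ ∧
        ∀ g : Euc d → ℝ≥0∞, Measurable g →
          ∫⁻ x in P.carrier, ‖f x - c‖ₑ * g x ≤
            (2 ^ d * t + ε) * (∫⁻ x in P.carrier, g x) + 2 ^ (d + 1) * sparseForm f g T) :
    ∃ (T : Finset (Cube d)) (E : Cube d → Set (Euc d)), SparseIn P P.side T E ∧
      ∀ g : Euc d → ℝ≥0∞, Measurable g →
        ∫⁻ x in P.carrier, ‖f x - cubeAvg f P‖ₑ * g x ≤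
          ε * (∫⁻ x in P.carrier, g x) + 2 ^ (d + 1) * sparseForm f g T := by
  classical
  by_cases h0 : oscE f P = 0
  · -- `f` is constant on `P`, and the family `{P}` suffices
    refine ⟨{P}, fun _ => P.core, ⟨?_, ?_, ?_, ?_, ?_, ?_, ?_⟩, ?_⟩
    · exact fun _ _ => P.isOpen_core.measurableSet
    · intro S hS
      rw [Finset.mem_singleton.1 hS]
      exact P.core_subset
    · intro S hS
      rw [Finset.mem_singleton.1 hS, P.volume_core, P.volume_carrier, two_mul]
      exact le_self_add
    · intro S hS
      rw [Finset.mem_singleton.1 hS]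
    · exact fun _ _ => subset_rfl
    · intro S hS
      rw [Finset.mem_singleton.1 hS]
    · simp
    · intro g _
      have h1 : ∫⁻ x in P.carrier, ‖f x - cubeAvg f P‖ₑ * g x = 0 := by
        have h2 := (lintegral_eq_zero_iff (by fun_prop)).1 h0
        rw [← lintegral_zero (μ := volume.restrict P.carrier)]
        refine lintegral_congr_ae ?_
        filter_upwards [h2] with x hx
        rw [hx]; simp
      rw [h1]
      exact bot_le
  have hv0 := P.volume_ne_zero
  have hvt := P.volume_ne_top
  have hot := oscE_ne_top hf P
  set a : ℝ≥0∞ := (volume P.carrier)⁻¹ * oscE f P with ha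
  have hat : a ≠ ∞ := ENNReal.mul_ne_top (ENNReal.inv_ne_top.2 hv0) hot
  have ha0 : a ≠ 0 := mul_ne_zero (ENNReal.inv_ne_zero.2 hvt) h0
  have hav : a * volume P.carrier = oscE f P := by
    rw [ha, mul_right_comm, ENNReal.inv_mul_cancel hv0 hvt, one_mul]
  obtain ⟨T, E, hTE, hvol, hdom⟩ := IH (cubeAvg f P) (2 * a) (ENNReal.mul_ne_top (by simp) hat)
    (by
      change oscE f P ≤ _
      rw [mul_assoc, hav, two_mul]
      exact le_self_add)
  have hPT : P ∉ T := fun h => by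
    have := hTE.side P h
    linarith [P.side_pos]
  set U : Set (Euc d) := ⋃ S ∈ T, S.carrier with hU
  have hUm : MeasurableSet U :=
    Finset.measurableSet_biUnion T fun S _ => S.measurableSet_carrier
  have hUvol : 2 * volume U ≤ volume P.carrier := by
    have h1 : a * (2 * volume U) ≤ a * volume P.carrier := by
      rw [hav, ← mul_assoc, mul_comm a 2]
      exact hvol
    exact (ENNReal.mul_le_mul_iff_right ha0 hat).1 h1
  have hUt : volume U ≠ ∞ := by
    refine ne_top_of_le_ne_top hvt (le_trans ?_ hUvol)
    rw [two_mul]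
    exact le_self_add
  have hnew : volume P.carrier ≤ 2 * volume (P.core \ U) := by
    have h1 : volume P.carrier ≤ volume (P.core \ U) + volume U := by
      rw [P.volume_carrier, ← P.volume_core]
      exact (measure_mono (by rw [sdiff_union_self]; exact subset_union_left)).trans
        (measure_union_le (P.core \ U) U)
    have h2 : volume P.carrier + volume P.carrier ≤
        2 * volume (P.core \ U) + volume P.carrier := by
      calc volume P.carrier + volume P.carrier = 2 * volume P.carrier := (two_mul _).symm
        _ ≤ 2 * (volume (P.core \ U) + volume U) := by gcongr
        _ = 2 * volume (P.core \ U) + 2 * volume U := mul_add _ _ _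
        _ ≤ _ := by gcongr
    exact (ENNReal.add_le_add_iff_right hvt).1 h2
  set E' : Cube d → Set (Euc d) := Function.update E P (P.core \ U) with hE'
  have hE'P : E' P = P.core \ U := Function.update_self _ _ _
  have hE'S : ∀ S ∈ T, E' S = E S := fun S hS =>
    Function.update_of_ne (ne_of_mem_of_not_mem hS hPT) _ _
  have hdisjP : ∀ S ∈ T, Disjoint (P.core \ U) (E S) := by
    intro S hS
    rw [Set.disjoint_left]
    intro x hx hxE
    exact hx.2 (mem_biUnion (show S ∈ (T : Set (Cube d)) from hS) (hTE.sub S hS hxE))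
  refine ⟨insert P T, E', ⟨?_, ?_, ?_, ?_, ?_, ?_, ?_⟩, ?_⟩
  · refine (Finset.forall_mem_insert _ _ _).2 ⟨?_, fun S hS => ?_⟩
    · rw [hE'P]; exact P.isOpen_core.measurableSet.diff hUm
    · rw [hE'S S hS]; exact hTE.meas S hS
  · refine (Finset.forall_mem_insert _ _ _).2 ⟨?_, fun S hS => ?_⟩
    · rw [hE'P]; exact sdiff_subset.trans P.core_subset
    · rw [hE'S S hS]; exact hTE.sub S hS
  · refine (Finset.forall_mem_insert _ _ _).2 ⟨?_, fun S hS => ?_⟩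
    · rw [hE'P]; exact hnew
    · rw [hE'S S hS]; exact hTE.half S hS
  · exact (Finset.forall_mem_insert _ _ _).2 ⟨subset_rfl, hTE.subP⟩
  · refine (Finset.forall_mem_insert _ _ _).2 ⟨?_, fun S hS => ?_⟩
    · rw [hE'P]; exact sdiff_subset
    · rw [hE'S S hS]; exact hTE.core S hS
  · exact (Finset.forall_mem_insert _ _ _).2
      ⟨le_rfl, fun S hS => (hTE.side S hS).trans (by linarith [P.side_pos])⟩
  · rw [Finset.coe_insert]
    refine (pairwiseDisjoint_insert_of_notMem (by simpa using hPT)).2 ⟨?_, ?_⟩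
    · intro S hS Q hQ hne
      rw [Function.onFun, hE'S S hS, hE'S Q hQ]
      exact hTE.disj hS hQ hne
    · intro S hS
      rw [hE'P, hE'S S hS]
      exact hdisjP S hS
  · intro g hg
    refine (hdom g hg).trans (le_of_eq ?_)
    rw [sparseForm, sparseForm, Finset.sum_insert hPT, ← ha, pow_succ]
    ring

/-- Induction on the dyadic scale. A cube `P` on which `|f - c|` has average at most `t` is split
into its children; a child where the average exceeds `t` becomes a new stopping cube with its own
average as the new constant, the others are split further. At the scale `δ` the
continuity of `f` gives the pointwise bound `|f - c| ≤ t + ε`. -/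
theorem sparse_domination_aux {d : ℕ} {f : Euc d → ℂ} (hf : Continuous f) (ε : ℝ≥0∞) (δ : ℝ)
    (Q : Cube d)
    (hδ : ∀ x ∈ Q.carrier, ∀ y ∈ Q.carrier, (∀ i, |x i - y i| ≤ δ) → ‖f x - f y‖ₑ ≤ ε) (n : ℕ) :
    ∀ P : Cube d, P.carrier ⊆ Q.carrier → P.side ≤ 2 ^ n * δ → ∀ (c : ℂ) (t : ℝ≥0∞), t ≠ ∞ →
      ∫⁻ x in P.carrier, ‖f x - c‖ₑ ≤ t * volume P.carrier →
      ∃ (T : Finset (Cube d)) (E : Cube d → Set (Euc d)), SparseIn P (P.side / 2) T E ∧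
        t * volume (⋃ S ∈ T, S.carrier) ≤ ∫⁻ x in P.carrier, ‖f x - c‖ₑ ∧
        ∀ g : Euc d → ℝ≥0∞, Measurable g →
          ∫⁻ x in P.carrier, ‖f x - c‖ₑ * g x ≤
            (2 ^ d * t + ε) * (∫⁻ x in P.carrier, g x) + 2 ^ (d + 1) * sparseForm f g T := by
  classical
  induction n with
  | zero =>
    intro P hPQ hside c t ht havg
    refine ⟨∅, fun _ => ∅, ⟨?_, ?_, ?_, ?_, ?_, ?_, ?_⟩, ?_, ?_⟩
    any_goals simp
    intro g hg
    refine le_trans ?_ le_self_add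
    rw [← lintegral_const_mul _ hg]
    refine setLIntegral_mono' P.measurableSet_carrier fun x hx => ?_
    gcongr
    have h1 : ‖f x - c‖ₑ * volume P.carrier ≤ (t + ε) * volume P.carrier := by
      calc ‖f x - c‖ₑ * volume P.carrier = ∫⁻ _ in P.carrier, ‖f x - c‖ₑ :=
            (setLIntegral_const _ _).symm
        _ ≤ ∫⁻ y in P.carrier, (‖f y - c‖ₑ + ε) := by
            refine setLIntegral_mono' P.measurableSet_carrier fun y hy => ?_
            have h2 : f x - c = (f y - c) + (f x - f y) := by ring
            rw [h2]
            refine (enorm_add_le _ _).trans ?_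
            gcongr
            refine hδ x (hPQ hx) y (hPQ hy) fun i => ?_
            have h3 := abs_le.1 (hx i)
            have h4 := abs_le.1 (hy i)
            rw [pow_zero, one_mul] at hside
            rw [abs_le]
            constructor <;> linarith
        _ = (∫⁻ y in P.carrier, ‖f y - c‖ₑ) + ε * volume P.carrier := by
            rw [lintegral_add_right _ measurable_const, setLIntegral_const]
        _ ≤ (t + ε) * volume P.carrier := by
            rw [add_mul]
            gcongr
    have h5 : ‖f x - c‖ₑ ≤ t + ε :=
      (ENNReal.mul_le_mul_iff_left P.volume_ne_zero P.volume_ne_top).1 h1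
    refine h5.trans ?_
    gcongr
    exact le_mul_of_one_le_left bot_le (one_le_pow₀ (by norm_num))
  | succ n ih =>
    intro P hPQ hside c t ht havg
    have key : ∀ σ : Fin d → Bool,
        ∃ (T : Finset (Cube d)) (E : Cube d → Set (Euc d)),
          SparseIn (P.child σ) (P.side / 2) T E ∧
          t * volume (⋃ S ∈ T, S.carrier) ≤ ∫⁻ x in (P.child σ).carrier, ‖f x - c‖ₑ ∧
          ∀ g : Euc d → ℝ≥0∞, Measurable g →
            ∫⁻ x in (P.child σ).carrier, ‖f x - c‖ₑ * g x ≤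
              (2 ^ d * t + ε) * (∫⁻ x in (P.child σ).carrier, g x) +
                2 ^ (d + 1) * sparseForm f g T := by
      intro σ
      set R := P.child σ with hR
      have hRQ : R.carrier ⊆ Q.carrier := (P.child_subset σ).trans hPQ
      have hRs : R.side = P.side / 2 := rfl
      have hRside : R.side ≤ 2 ^ n * δ := by
        rw [hRs]
        rw [pow_succ] at hside
        linarith
      by_cases hcase : ∫⁻ x in R.carrier, ‖f x - c‖ₑ ≤ t * volume R.carrier
      · obtain ⟨T, E, h1, h2, h3⟩ := ih R hRQ hRside c t ht hcase
        exact ⟨T, E, ⟨h1.meas, h1.sub, h1.half, h1.subP, h1.core,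
          fun S hS => (h1.side S hS).trans (by linarith [R.side_pos]), h1.disj⟩, h2, h3⟩
      · obtain ⟨T, E, h1, h2⟩ := stopping_step hf ε R (ih R hRQ hRside)
        refine ⟨T, E, h1, ?_, ?_⟩
        · refine le_trans ?_ (not_le.1 hcase).le
          gcongr
          exact iUnion₂_subset h1.subP
        · intro g hg
          -- passing from the parent to a child costs a factor `2 ^ d` in the average
          have h3 : ‖cubeAvg f R - c‖ₑ ≤ 2 ^ d * t := by
            calc ‖cubeAvg f R - c‖ₑ ≤ (volume R.carrier)⁻¹ * ∫⁻ x in R.carrier, ‖f x - c‖ₑ :=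
                  enorm_cubeAvg_sub_le hf R c
              _ ≤ (volume R.carrier)⁻¹ * (t * volume P.carrier) := by
                  gcongr
                  exact (lintegral_mono_set (P.child_subset σ)).trans havg
              _ = 2 ^ d * t * ((volume R.carrier)⁻¹ * volume R.carrier) := by
                  rw [P.volume_eq_child σ]; ring
              _ = 2 ^ d * t := by
                  rw [ENNReal.inv_mul_cancel R.volume_ne_zero R.volume_ne_top, mul_one]
          calc ∫⁻ x in R.carrier, ‖f x - c‖ₑ * g x
              ≤ ∫⁻ x in R.carrier, (‖f x - cubeAvg f R‖ₑ * g x + 2 ^ d * t * g x) := by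
                refine lintegral_mono fun x => ?_
                rw [← add_mul]
                gcongr
                have h4 : f x - c = (f x - cubeAvg f R) + (cubeAvg f R - c) := by ring
                rw [h4]
                exact (enorm_add_le _ _).trans (by gcongr)
            _ = (∫⁻ x in R.carrier, ‖f x - cubeAvg f R‖ₑ * g x) +
                  2 ^ d * t * ∫⁻ x in R.carrier, g x := by
                rw [lintegral_add_right _ (hg.const_mul _), lintegral_const_mul _ hg]
            _ ≤ (ε * (∫⁻ x in R.carrier, g x) + 2 ^ (d + 1) * sparseForm f g T) +
                  2 ^ d * t * ∫⁻ x in R.carrier, g x := by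
                gcongr
                exact h2 g hg
            _ = _ := by ring
    choose T E h1 h2 h3 using key
    obtain ⟨T', E', hTE, hmem, hsum⟩ := SparseIn.union h1
    refine ⟨T', E', hTE, ?_, ?_⟩
    · calc t * volume (⋃ S ∈ T', S.carrier)
          ≤ t * ∑ σ, volume (⋃ S ∈ T σ, S.carrier) := by
            gcongr
            refine le_trans (measure_mono ?_) (measure_iUnion_fintype_le _ _)
            refine iUnion₂_subset fun S hS => ?_
            obtain ⟨σ, hσ⟩ := (hmem S).1 hS
            exact subset_iUnion_of_subset σ
              (subset_biUnion_of_mem (u := fun S : Cube d => S.carrier) hσ)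
        _ = ∑ σ, t * volume (⋃ S ∈ T σ, S.carrier) := Finset.mul_sum _ _ _
        _ ≤ ∑ σ, ∫⁻ x in (P.child σ).carrier, ‖f x - c‖ₑ := Finset.sum_le_sum fun σ _ => h2 σ
        _ = _ := (P.lintegral_child _).symm
    · intro g hg
      rw [P.lintegral_child, P.lintegral_child, sparseForm, hsum, Finset.mul_sum, Finset.mul_sum,
        ← Finset.sum_add_distrib]
      exact Finset.sum_le_sum fun σ _ => h3 σ g hg

/-- **Sparse domination**: on a cube `Q`, up to an arbitrarily small error, `|f - ⟨f⟩_Q|` is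
dominated by a sum of average oscillations over a finite sparse family. -/
theorem sparse_domination {d : ℕ} {f : Euc d → ℂ} (hf : Continuous f) (Q : Cube d)
    {ε : ℝ} (hε : 0 < ε) :
    ∃ T : Finset (Cube d), IsSparse (T : Set (Cube d)) ∧
      ∀ g : Euc d → ℝ≥0∞, Measurable g →
        ∫⁻ x in Q.carrier, ‖f x - cubeAvg f Q‖ₑ * g x ≤
          ENNReal.ofReal ε * (∫⁻ x in Q.carrier, g x) + 2 ^ (d + 1) * sparseForm f g T := by
  have huc := Q.isCompact_carrier.uniformContinuousOn_of_continuous hf.continuousOn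
  obtain ⟨η, hη, hη'⟩ := Metric.uniformContinuousOn_iff.1 huc ε hε
  set δ : ℝ := η / (2 * (d + 1)) with hδ
  have hδ0 : 0 < δ := by positivity
  have hδ' : ∀ x ∈ Q.carrier, ∀ y ∈ Q.carrier, (∀ i, |x i - y i| ≤ δ) →
      ‖f x - f y‖ₑ ≤ ENNReal.ofReal ε := by
    intro x hx y hy hxy
    have h1 : dist x y ≤ d * (2 * δ) := by
      -- both points lie in the cube of side `2 δ` around `y`
      refine Cube.dist_le ⟨y, 2 * δ, by positivity⟩ (fun i => ?_) (fun i => ?_)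
      · simpa using hxy i
      · simpa using hδ0.le
    have h2 : dist x y < η := by
      refine h1.trans_lt ?_
      have h3 : δ * (2 * (d + 1)) = η := div_mul_cancel₀ _ (by positivity)
      nlinarith
    have h4 := (hη' x hx y hy h2).le
    rw [dist_eq_norm] at h4
    rw [← ofReal_norm]
    exact ENNReal.ofReal_le_ofReal h4
  obtain ⟨n, hn⟩ := pow_unbounded_of_one_lt (Q.side / δ) (one_lt_two)
  have hn' : Q.side ≤ 2 ^ n * δ := by
    rw [div_lt_iff₀ hδ0] at hn
    exact hn.le
  obtain ⟨T, E, h1, h2⟩ := stopping_step hf (ENNReal.ofReal ε) Q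
    (sparse_domination_aux hf _ δ Q hδ' n Q subset_rfl hn')
  exact ⟨T, h1.isSparse, h2⟩

/-! ### The `L^r` norm modulo constants from weighted sparse sums -/

/-- The homogeneous form of a bound on normalized weighted sums of oscillations. -/
theorem sum_oscE_homogeneous {d : ℕ} {r' : ℝ} (hr' : 0 < r') {f : Euc d → ℂ} {A : ℝ≥0∞}
    (hA : ∀ T : Finset (Cube d), IsSparse (T : Set (Cube d)) → ∀ lam : Cube d → ℝ,
      (∀ Q, 0 ≤ lam Q) → ∑ S ∈ T, volume S.carrier * ENNReal.ofReal (lam S) ^ r' ≤ 1 →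
      ∑ S ∈ T, ENNReal.ofReal (lam S) * oscE f S ≤ A)
    (T : Finset (Cube d)) (hT : IsSparse (T : Set (Cube d))) (lam : Cube d → ℝ≥0∞)
    (hlam : ∀ S, lam S ≠ ∞) {W : ℝ≥0∞} (hW0 : W ≠ 0) (hWt : W ≠ ∞)
    (hW : ∑ S ∈ T, volume S.carrier * lam S ^ r' ≤ W) :
    ∑ S ∈ T, lam S * oscE f S ≤ A * W ^ (1 / r') := by
  set V : ℝ≥0∞ := W ^ (1 / r') with hV
  have hV0 : V ≠ 0 := by
    rw [hV, Ne, ENNReal.rpow_eq_zero_iff]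
    simp [hW0, hWt]
  have hVt : V ≠ ∞ := ENNReal.rpow_ne_top_of_nonneg (by positivity) hWt
  have hVW : V⁻¹ ^ r' = W⁻¹ := by
    rw [ENNReal.inv_rpow, hV, ← ENNReal.rpow_mul, one_div, inv_mul_cancel₀ hr'.ne',
      ENNReal.rpow_one]
  have hfin : ∀ S, ENNReal.ofReal ((V⁻¹ * lam S).toReal) = V⁻¹ * lam S := fun S =>
    ENNReal.ofReal_toReal (ENNReal.mul_ne_top (ENNReal.inv_ne_top.2 hV0) (hlam S))
  have h1 := hA T hT (fun S => (V⁻¹ * lam S).toReal) (fun _ => ENNReal.toReal_nonneg) (by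
    simp only [hfin, ENNReal.mul_rpow_of_nonneg _ _ hr'.le, hVW]
    calc ∑ S ∈ T, volume S.carrier * (W⁻¹ * lam S ^ r')
        = W⁻¹ * ∑ S ∈ T, volume S.carrier * lam S ^ r' := by
          rw [Finset.mul_sum]
          exact Finset.sum_congr rfl fun S _ => by ring
      _ ≤ W⁻¹ * W := by gcongr
      _ = 1 := ENNReal.inv_mul_cancel hW0 hWt)
  simp only [hfin] at h1
  calc ∑ S ∈ T, lam S * oscE f S = V * ∑ S ∈ T, V⁻¹ * lam S * oscE f S := by
        rw [Finset.mul_sum]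
        refine Finset.sum_congr rfl fun S _ => ?_
        rw [← mul_assoc, ← mul_assoc, ENNReal.mul_inv_cancel hV0 hVt, one_mul]
    _ ≤ V * A := by gcongr
    _ = A * V := mul_comm _ _

theorem lintegral_cube_rpow_ne_top {d : ℕ} {f : Euc d → ℂ} (hf : Continuous f) (Q : Cube d)
    {s : ℝ} (hs : 0 < s) : ∫⁻ x in Q.carrier, ‖f x‖ₑ ^ s ≠ ∞ := by
  have h1 : Continuous fun x => ‖f x‖ ^ s := hf.norm.rpow_const fun _ => Or.inr hs.le
  have h2 : IntegrableOn (fun x => ‖f x‖ ^ s) Q.carrier :=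
    h1.continuousOn.integrableOn_compact Q.isCompact_carrier
  have h3 := h2.2
  rw [HasFiniteIntegral] at h3
  convert h3.ne using 3 with x
  rw [Real.enorm_eq_ofReal (by positivity),
    ← ENNReal.ofReal_rpow_of_nonneg (norm_nonneg _) hs.le, ofReal_norm]

/-- The local estimate: sparse domination is tested against `g = |f - ⟨f⟩_Q| ^ (r - 1)`, and the
averages of `g` serve as weights, their size being controlled by the Carleson embedding. -/
theorem eLpNorm_cube_le {d : ℕ} {r r' : ℝ} (hrr : r.HolderConjugate r') {f : Euc d → ℂ}
    (hf : Continuous f) {A : ℝ≥0∞}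
    (hA : ∀ T : Finset (Cube d), IsSparse (T : Set (Cube d)) → ∀ lam : Cube d → ℝ,
      (∀ Q, 0 ≤ lam Q) → ∑ S ∈ T, volume S.carrier * ENNReal.ofReal (lam S) ^ r' ≤ 1 →
      ∑ S ∈ T, ENNReal.ofReal (lam S) * oscE f S ≤ A) (Q : Cube d) :
    eLpNorm (fun x => f x - cubeAvg f Q) (ENNReal.ofReal r) (volume.restrict Q.carrier) ≤
      2 ^ (d + 1) * ENNReal.ofReal (4 * 5 ^ d * r' * 2 ^ (r' - 1) / (r' - 1)) ^ (1 / r') * A := by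
  have hr0 := hrr.pos
  have hr'0 := hrr.symm.pos
  have hr1 := hrr.sub_one_pos
  have hr'1 := hrr.symm.sub_one_pos
  set K : ℝ≥0∞ := ENNReal.ofReal (4 * 5 ^ d * r' * 2 ^ (r' - 1) / (r' - 1)) with hK
  have hK0 : K ≠ 0 := (ENNReal.ofReal_pos.2 (by positivity)).ne'
  have hKt : K ≠ ∞ := ENNReal.ofReal_ne_top
  set h : Euc d → ℝ≥0∞ := fun x => ‖f x - cubeAvg f Q‖ₑ with hh
  have hfc : Continuous fun x => f x - cubeAvg f Q := hf.sub continuous_const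
  have hhm : Measurable h := by fun_prop
  set H : ℝ≥0∞ := ∫⁻ x in Q.carrier, h x ^ r with hH
  have hHt : H ≠ ∞ := lintegral_cube_rpow_ne_top hfc Q hr0
  rw [eLpNorm_eq_lintegral_rpow_enorm_toReal (by simpa using hr0) ENNReal.ofReal_ne_top,
    ENNReal.toReal_ofReal hr0.le]
  change H ^ (1 / r) ≤ _
  by_cases hH0 : H = 0
  · rw [hH0, ENNReal.zero_rpow_of_pos (by positivity)]
    exact bot_le
  set g : Euc d → ℝ≥0∞ := Q.carrier.indicator fun x => h x ^ (r - 1) with hg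
  have hgm : Measurable g := (hhm.pow_const _).indicator Q.measurableSet_carrier
  have hgint : ∫⁻ x, g x ≠ ∞ := by
    rw [hg, lintegral_indicator Q.measurableSet_carrier]
    exact lintegral_cube_rpow_ne_top hfc Q hr1
  have hgS : ∀ S : Cube d, ∫⁻ x in S.carrier, g x ≠ ∞ := fun S =>
    ne_top_of_le_ne_top hgint (setLIntegral_le_lintegral _ _)
  have hgr : ∫⁻ x, g x ^ r' = H := by
    have h1 : ∀ x, g x ^ r' = Q.carrier.indicator (fun x => h x ^ r) x := by
      intro x
      by_cases hx : x ∈ Q.carrier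
      · rw [hg, indicator_of_mem hx, indicator_of_mem hx, ← ENNReal.rpow_mul,
          hrr.sub_one_mul_conj]
      · rw [hg, indicator_of_notMem hx, indicator_of_notMem hx, ENNReal.zero_rpow_of_pos hr'0]
    simp only [h1]
    rw [lintegral_indicator Q.measurableSet_carrier]
  have hhg : ∫⁻ x in Q.carrier, ‖f x - cubeAvg f Q‖ₑ * g x = H := by
    refine setLIntegral_congr_fun Q.measurableSet_carrier fun x hx => ?_
    change h x * g x = h x ^ r
    rw [hg, indicator_of_mem hx]
    calc h x * h x ^ (r - 1) = h x ^ (1 : ℝ) * h x ^ (r - 1) := by rw [ENNReal.rpow_one]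
      _ = h x ^ r := by
        rw [← ENNReal.rpow_add_of_nonneg _ _ zero_le_one hr1.le, add_sub_cancel]
  have hbound : ∀ T : Finset (Cube d), IsSparse (T : Set (Cube d)) →
      sparseForm f g T ≤ A * (K * H) ^ (1 / r') := by
    intro T hT
    have h2 := sum_oscE_homogeneous hr'0 hA T hT
      (fun S => (volume S.carrier)⁻¹ * ∫⁻ x in S.carrier, g x)
      (fun S => ENNReal.mul_ne_top (ENNReal.inv_ne_top.2 S.volume_ne_zero) (hgS S))
      (W := K * H) (mul_ne_zero hK0 hH0) (ENNReal.mul_ne_top hKt hHt)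
      ((carleson_embedding hrr.symm.lt T hT hgm).trans (by rw [hgr]))
    refine le_trans (le_of_eq ?_) h2
    exact Finset.sum_congr rfl fun S _ => by ring
  have hmain : H ≤ 2 ^ (d + 1) * (A * (K * H) ^ (1 / r')) := by
    refine ENNReal.le_of_forall_pos_le_add fun ε hε _ => ?_
    set G : ℝ≥0∞ := ∫⁻ x in Q.carrier, g x with hG
    have hGt : G ≠ ∞ := hgS Q
    have hη : 0 < (ε : ℝ) / (G.toReal + 1) :=
      div_pos hε (by positivity)
    obtain ⟨T, hT, hdom⟩ := sparse_domination hf Q hη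
    have h3 := hdom g hgm
    rw [hhg] at h3
    have h4 : ENNReal.ofReal ((ε : ℝ) / (G.toReal + 1)) * G ≤ ε := by
      calc ENNReal.ofReal ((ε : ℝ) / (G.toReal + 1)) * G
          = ENNReal.ofReal ((ε : ℝ) / (G.toReal + 1) * G.toReal) := by
            rw [ENNReal.ofReal_mul hη.le, ENNReal.ofReal_toReal hGt]
        _ ≤ ENNReal.ofReal ε := by
            refine ENNReal.ofReal_le_ofReal ?_
            rw [div_mul_eq_mul_div, div_le_iff₀ (by positivity)]
            refine mul_le_mul_of_nonneg_left ?_ ε.coe_nonneg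
            linarith
        _ = ε := by simp
    calc H ≤ _ := h3
      _ ≤ ε + 2 ^ (d + 1) * (A * (K * H) ^ (1 / r')) := by
          gcongr
          exact hbound T hT
      _ = _ := add_comm _ _
  have hHs : H = H ^ (1 / r) * H ^ (1 / r') := by
    rw [← ENNReal.rpow_add _ _ hH0 hHt, one_div, one_div, hrr.inv_add_inv_eq_one,
      ENNReal.rpow_one]
  have hHp0 : H ^ (1 / r') ≠ 0 := by
    rw [Ne, ENNReal.rpow_eq_zero_iff]
    simp [hH0, hHt]
  have hHpt : H ^ (1 / r') ≠ ∞ := ENNReal.rpow_ne_top_of_nonneg (by positivity) hHt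
  refine (ENNReal.mul_le_mul_iff_left hHp0 hHpt).1 ?_
  rw [← hHs]
  refine hmain.trans (le_of_eq ?_)
  rw [ENNReal.mul_rpow_of_nonneg _ _ (by positivity)]
  ring

/-- The global estimate, by exhausting the space by cubes: the averages over these cubes stay
bounded, and any limit point `c` of them works by Fatou's lemma. -/
theorem iInf_eLpNorm_le {d : ℕ} {r r' : ℝ} (hrr : r.HolderConjugate r') {f : Euc d → ℂ}
    (hf : Continuous f) {A : ℝ≥0∞}
    (hA : ∀ T : Finset (Cube d), IsSparse (T : Set (Cube d)) → ∀ lam : Cube d → ℝ,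
      (∀ Q, 0 ≤ lam Q) → ∑ S ∈ T, volume S.carrier * ENNReal.ofReal (lam S) ^ r' ≤ 1 →
      ∑ S ∈ T, ENNReal.ofReal (lam S) * oscE f S ≤ A) :
    ⨅ c : ℂ, eLpNorm (fun x => f x - c) (ENNReal.ofReal r) volume ≤
      2 ^ (d + 1) * ENNReal.ofReal (4 * 5 ^ d * r' * 2 ^ (r' - 1) / (r' - 1)) ^ (1 / r') * A := by
  have hr0 := hrr.pos
  set B : ℝ≥0∞ :=
    2 ^ (d + 1) * ENNReal.ofReal (4 * 5 ^ d * r' * 2 ^ (r' - 1) / (r' - 1)) ^ (1 / r') * A with hB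
  by_cases hBt : B = ∞
  · rw [hBt]
    exact le_top
  have hp1 : 1 ≤ ENNReal.ofReal r := by
    rw [← ENNReal.ofReal_one]
    exact ENNReal.ofReal_le_ofReal hrr.lt.le
  set Q : ℕ → Cube d := fun k => ⟨0, k + 1, by positivity⟩ with hQ
  have hQmem : ∀ k x, x ∈ (Q k).carrier ↔ ∀ i, |x i| ≤ ((k : ℝ) + 1) / 2 := by
    intro k x
    simp [hQ, Cube.carrier]
  have hloc : ∀ k, eLpNorm (fun x => f x - cubeAvg f (Q k)) (ENNReal.ofReal r)
      (volume.restrict (Q k).carrier) ≤ B := fun k => eLpNorm_cube_le hrr hf hA (Q k)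
  have hQ0 : volume (Q 0).carrier = 1 := by
    rw [Cube.volume_carrier]
    simp [hQ]
  have hQsub : ∀ k, (Q 0).carrier ⊆ (Q k).carrier := by
    intro k x hx
    rw [hQmem] at hx ⊢
    intro i
    have := hx i
    have hk : (0 : ℝ) ≤ k := k.cast_nonneg
    simp only [Nat.cast_zero] at this
    linarith
  have hbdd : ∀ k, ‖cubeAvg f (Q k) - cubeAvg f (Q 0)‖ₑ ≤ B + B := by
    intro k
    have hne : volume.restrict (Q 0).carrier ≠ 0 := by
      rw [Ne, Measure.restrict_eq_zero]
      exact (Q 0).volume_ne_zero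
    have h1 := eLpNorm_const (μ := volume.restrict (Q 0).carrier)
      (cubeAvg f (Q k) - cubeAvg f (Q 0)) (p := ENNReal.ofReal r)
      (by simpa using hr0) hne
    rw [Measure.restrict_apply_univ, hQ0, ENNReal.one_rpow, mul_one] at h1
    rw [← h1]
    have h2 : (fun _ : Euc d => cubeAvg f (Q k) - cubeAvg f (Q 0)) =
        (fun x => f x - cubeAvg f (Q 0)) - (fun x => f x - cubeAvg f (Q k)) := by
      funext x
      simp only [Pi.sub_apply]
      ring
    rw [h2]
    refine (eLpNorm_sub_le (by fun_prop) (by fun_prop) hp1).trans ?_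
    gcongr
    · exact hloc 0
    · exact (eLpNorm_mono_measure _ (Measure.restrict_mono (hQsub k) le_rfl)).trans (hloc k)
  have hball : ∀ k, cubeAvg f (Q k) ∈ Metric.closedBall (cubeAvg f (Q 0)) (B + B).toReal := by
    intro k
    rw [Metric.mem_closedBall, dist_eq_norm, ← toReal_enorm]
    exact ENNReal.toReal_mono (ENNReal.add_ne_top.2 ⟨hBt, hBt⟩) (hbdd k)
  obtain ⟨c, -, φ, hφ, hlim⟩ := tendsto_subseq_of_bounded Metric.isBounded_closedBall hball
  refine (iInf_le _ c).trans ?_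
  have hfatou := Lp.eLpNorm_lim_le_liminf_eLpNorm (μ := volume) (p := ENNReal.ofReal r)
    (f := fun n => (Q (φ n)).carrier.indicator fun x => f x - cubeAvg f (Q (φ n)))
    (fun n => ((hf.sub continuous_const).aestronglyMeasurable).indicator
      (Cube.measurableSet_carrier _)) (fun x => f x - c) (by
      refine Filter.Eventually.of_forall fun x => ?_
      have h3 : Filter.Tendsto (fun n => f x - cubeAvg f (Q (φ n))) Filter.atTop
          (nhds (f x - c)) := tendsto_const_nhds.sub hlim
      refine h3.congr' ?_
      obtain ⟨N, hN⟩ := exists_nat_ge (2 * ‖x‖)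
      filter_upwards [Filter.eventually_ge_atTop N] with n hn
      rw [indicator_of_mem]
      rw [hQmem]
      intro i
      have h4 : |x i| ≤ ‖x‖ := PiLp.norm_apply_le x i
      have h5 : (N : ℝ) ≤ φ n := by exact_mod_cast hn.trans (hφ.id_le n)
      linarith)
  refine hfatou.trans ?_
  refine (Filter.liminf_le_liminf (v := fun _ => B) (Filter.Eventually.of_forall fun n => ?_)).trans
    (Filter.liminf_const B).le
  rw [eLpNorm_indicator_eq_eLpNorm_restrict (Cube.measurableSet_carrier _)]
  exact hloc _

/-! ### Bi-parameter oscillations as averages of one-parameter oscillations -/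

section BiParameter

variable {d1 d2 : ℕ} {b : Euc d1 × Euc d2 → ℂ}

theorem continuous_avgFst (hb : Continuous b) (I : Cube d1) : Continuous (avgFst b I) := by
  have h : Continuous (Function.uncurry fun (x2 : Euc d2) (y1 : Euc d1) => b (y1, x2)) :=
    hb.comp (by fun_prop)
  exact (continuous_parametric_integral_of_continuous (μ := volume) h I.isCompact_carrier).const_smul
    (volume I.carrier).toReal⁻¹

theorem continuous_avgSnd (hb : Continuous b) (S : Cube d2) : Continuous (avgSnd b S) := by
  have h : Continuous (Function.uncurry fun (x1 : Euc d1) (y2 : Euc d2) => b (x1, y2)) := hb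
  exact (continuous_parametric_integral_of_continuous (μ := volume) h S.isCompact_carrier).const_smul
    (volume S.carrier).toReal⁻¹

theorem integrableOn_rect (hb : Continuous b) (I : Cube d1) (S : Cube d2) :
    IntegrableOn b (I.carrier ×ˢ S.carrier) :=
  hb.continuousOn.integrableOn_compact (I.isCompact_carrier.prod S.isCompact_carrier)

theorem avgRect_eq_cubeAvg_avgSnd (hb : Continuous b) (I : Cube d1) (S : Cube d2) :
    avgRect b I S = cubeAvg (avgSnd b S) I := by
  have h := integrableOn_rect hb I S
  rw [Measure.volume_eq_prod] at h
  simp only [avgRect, cubeAvg, avgSnd]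
  rw [Measure.volume_eq_prod, setIntegral_prod _ h, Measure.prod_prod, integral_smul, smul_smul,
    ENNReal.toReal_mul, mul_inv]

theorem avgRect_eq_cubeAvg_avgFst (hb : Continuous b) (I : Cube d1) (S : Cube d2) :
    avgRect b I S = cubeAvg (avgFst b I) S := by
  have h := integrableOn_rect hb I S
  rw [Measure.volume_eq_prod] at h
  have h' : Integrable (Function.uncurry fun x y => b (x, y))
      ((volume.restrict I.carrier).prod (volume.restrict S.carrier)) := by
    rw [Measure.prod_restrict]; exact h
  simp only [avgRect, cubeAvg, avgFst]
  rw [Measure.volume_eq_prod, setIntegral_prod _ h, Measure.prod_prod, integral_smul, smul_smul,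
    ENNReal.toReal_mul, mul_inv, integral_integral_swap h', mul_comm]

/-- Integrating out the first variable, `osc^{1,1}` is the one-parameter oscillation over `S` of
the slices of `b - ⟨b⟩_{I,1}`. -/
theorem ofReal_osc11 (hb : Continuous b) (I : Cube d1) (S : Cube d2) :
    ENNReal.ofReal (osc11 b I S) =
      ∫⁻ x1 in I.carrier, oscE (fun x2 => b (x1, x2) - avgFst b I x2) S := by
  have h1 := continuous_avgFst hb I
  have h2 := continuous_avgSnd hb S
  have hc : Continuous fun x : Euc d1 × Euc d2 =>
      b x - avgFst b I x.2 - avgSnd b S x.1 + avgRect b I S := by fun_prop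
  have hi := integrableOn_rect hc I S
  rw [osc11, ofReal_integral_norm_eq_lintegral_enorm hi, Measure.volume_eq_prod,
    ← Measure.prod_restrict, lintegral_prod _ (by fun_prop)]
  refine lintegral_congr fun x1 => ?_
  rw [oscE]
  refine lintegral_congr fun x2 => ?_
  have hs : Continuous fun x2 => b (x1, x2) := by fun_prop
  rw [cubeAvg_sub hs h1, ← avgRect_eq_cubeAvg_avgFst hb]
  have : cubeAvg (fun x2 => b (x1, x2)) S = avgSnd b S x1 := rfl
  rw [this]
  congr 1
  ring

theorem measurable_oscE_slice {X : Type*} [TopologicalSpace X] [MeasurableSpace X]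
    [OpensMeasurableSpace X] [SecondCountableTopology X] [LocallyCompactSpace X] {H : X × Euc d2 → ℂ}
    (hH : Continuous H) (S : Cube d2) : Measurable fun x => oscE (fun x2 => H (x, x2)) S := by
  have h : Continuous (Function.uncurry fun (x1 : X) (y2 : Euc d2) => H (x1, y2)) := hH
  have h2 : Continuous fun x => cubeAvg (fun x2 => H (x, x2)) S :=
    (continuous_parametric_integral_of_continuous (μ := volume) h S.isCompact_carrier).const_smul
      (volume S.carrier).toReal⁻¹
  have h3 : Continuous fun p : X × Euc d2 => ‖H p - cubeAvg (fun x2 => H (p.1, x2)) S‖ₑ :=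
    (hH.sub (h2.comp continuous_fst)).enorm
  exact Measurable.lintegral_prod_right' h3.measurable

/-- Convexity: the oscillation of an average is at most the average of the oscillations. -/
theorem oscE_avgFst_le (hb : Continuous b) (J : Cube d1) (S : Cube d2) :
    oscE (avgFst b J) S ≤
      (volume J.carrier)⁻¹ * ∫⁻ y in J.carrier, oscE (fun x2 => b (y, x2)) S := by
  have h2 := continuous_avgSnd hb S
  have hc : Continuous fun p : Euc d1 × Euc d2 => ‖b p - avgSnd b S p.1‖ₑ := by fun_prop
  have key : ∀ x2, ‖avgFst b J x2 - cubeAvg (avgFst b J) S‖ₑ ≤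
      (volume J.carrier)⁻¹ * ∫⁻ y in J.carrier, ‖b (y, x2) - avgSnd b S y‖ₑ := by
    intro x2
    have hs : Continuous fun y => b (y, x2) := by fun_prop
    have h := enorm_cubeAvg_le (fun y => b (y, x2) - avgSnd b S y) J
    rwa [cubeAvg_sub hs h2, ← avgRect_eq_cubeAvg_avgSnd hb, avgRect_eq_cubeAvg_avgFst hb] at h
  calc oscE (avgFst b J) S
      ≤ ∫⁻ x2 in S.carrier,
          (volume J.carrier)⁻¹ * ∫⁻ y in J.carrier, ‖b (y, x2) - avgSnd b S y‖ₑ :=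
        lintegral_mono key
    _ = (volume J.carrier)⁻¹ * ∫⁻ x2 in S.carrier,
          ∫⁻ y in J.carrier, ‖b (y, x2) - avgSnd b S y‖ₑ :=
        lintegral_const_mul' _ _ (ENNReal.inv_ne_top.2 J.volume_ne_zero)
    _ = _ := by
        rw [lintegral_lintegral_swap (by
          exact (hc.comp continuous_swap).measurable.aemeasurable)]
        rfl

end BiParameter

/-! ### The sparse testing quantity is controlled by the Hölder norm -/

section Upper

variable {d1 d2 : ℕ} {b : Euc d1 × Euc d2 → ℂ}

/-- Since `b (x, ·) - ⟨b⟩_{I,1}` is the average over `y ∈ I` of `b (x, ·) - b (y, ·)`, convexity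
bounds `osc^{1,1}` by a double average of one-parameter oscillations of differences. -/
theorem ofReal_osc11_le (hb : Continuous b) (I : Cube d1) (S : Cube d2) :
    ENNReal.ofReal (osc11 b I S) ≤ (volume I.carrier)⁻¹ *
      ∫⁻ p in I.carrier ×ˢ I.carrier, oscE (fun x2 => b (p.1, x2) - b (p.2, x2)) S := by
  have hD : Continuous fun q : (Euc d1 × Euc d1) × Euc d2 => b (q.1.1, q.2) - b (q.1.2, q.2) := by
    fun_prop
  have hm := measurable_oscE_slice hD S
  rw [ofReal_osc11 hb, Measure.volume_eq_prod, ← Measure.prod_restrict,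
    lintegral_prod _ hm.aemeasurable,
    ← lintegral_const_mul' _ _ (ENNReal.inv_ne_top.2 I.volume_ne_zero)]
  refine lintegral_mono fun x => ?_
  have hH : Continuous fun q : Euc d1 × Euc d2 => b (x, q.2) - b q := by fun_prop
  have h := oscE_avgFst_le hH I S
  have e : avgFst (fun q : Euc d1 × Euc d2 => b (x, q.2) - b q) I =
      fun x2 => b (x, x2) - avgFst b I x2 := by
    funext x2
    have h1 : Continuous fun y => b (y, x2) := by fun_prop
    have h2 := cubeAvg_sub (continuous_const (y := b (x, x2))) h1 I
    rw [cubeAvg_const] at h2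
    exact h2
  rwa [e] at h

theorem sum_osc11_le {r r' α : ℝ} (hrr : r.HolderConjugate r') (hα : 0 < α) (hb : Continuous b)
    {N : ℝ≥0∞}
    (hN : ∀ x y : Euc d1, ⨅ c : ℂ, eLpNorm (fun x2 => b (x, x2) - b (y, x2) - c)
      (ENNReal.ofReal r) volume ≤ N * ENNReal.ofReal (dist x y ^ α))
    (I : Cube d1) (T : Finset (Cube d2)) (hT : IsSparse (T : Set (Cube d2)))
    (lam : Cube d2 → ℝ≥0∞) (hlam : ∑ S ∈ T, volume S.carrier * lam S ^ r' ≤ 1) :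
    ∑ S ∈ T, lam S * ENNReal.ofReal (osc11 b I S) ≤
      2 * ENNReal.ofReal (4 * 5 ^ d2 * r * 2 ^ (r - 1) / (r - 1)) ^ (1 / r) *
        (N * ENNReal.ofReal ((d1 * I.side) ^ α)) * volume I.carrier := by
  set K : ℝ≥0∞ := 2 * ENNReal.ofReal (4 * 5 ^ d2 * r * 2 ^ (r - 1) / (r - 1)) ^ (1 / r)
    with hK
  have hD : Continuous fun q : (Euc d1 × Euc d1) × Euc d2 => b (q.1.1, q.2) - b (q.1.2, q.2) := by
    fun_prop
  have hKtop : K ≠ ∞ := by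
    have : 0 ≤ 1 / r := by have := hrr.pos; positivity
    exact ENNReal.mul_ne_top ENNReal.ofNat_ne_top
      (ENNReal.rpow_ne_top_of_nonneg this ENNReal.ofReal_ne_top)
  have hpt : ∀ p ∈ I.carrier ×ˢ I.carrier,
      ∑ S ∈ T, lam S * oscE (fun x2 => b (p.1, x2) - b (p.2, x2)) S ≤
        K * (N * ENNReal.ofReal ((d1 * I.side) ^ α)) := by
    rintro ⟨x, y⟩ ⟨hx, hy⟩
    have hf : Continuous fun x2 => b (x, x2) - b (y, x2) := by fun_prop
    calc _ ≤ ⨅ c : ℂ, K * eLpNorm (fun x2 => b (x, x2) - b (y, x2) - c)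
              (ENNReal.ofReal r) volume :=
          le_iInf fun c => sum_oscE_le_eLpNorm hrr T hT lam hlam hf c
      _ = K * ⨅ c : ℂ, eLpNorm (fun x2 => b (x, x2) - b (y, x2) - c)
              (ENNReal.ofReal r) volume := by
          rw [ENNReal.mul_iInf fun h => absurd h hKtop]
      _ ≤ K * (N * ENNReal.ofReal (dist x y ^ α)) := by gcongr; exact hN x y
      _ ≤ _ := by
          gcongr
          exact I.dist_le hx hy
  calc ∑ S ∈ T, lam S * ENNReal.ofReal (osc11 b I S)
      ≤ ∑ S ∈ T, lam S * ((volume I.carrier)⁻¹ * ∫⁻ p in I.carrier ×ˢ I.carrier,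
          oscE (fun x2 => b (p.1, x2) - b (p.2, x2)) S) := by
        gcongr with S
        exact ofReal_osc11_le hb I S
    _ = (volume I.carrier)⁻¹ * ∫⁻ p in I.carrier ×ˢ I.carrier,
          ∑ S ∈ T, lam S * oscE (fun x2 => b (p.1, x2) - b (p.2, x2)) S := by
        rw [lintegral_finsetSum _ fun S _ => (measurable_oscE_slice hD S).const_mul _,
          Finset.mul_sum]
        refine Finset.sum_congr rfl fun S _ => ?_
        rw [lintegral_const_mul _ (measurable_oscE_slice hD S)]
        ring
    _ ≤ (volume I.carrier)⁻¹ * ∫⁻ p in I.carrier ×ˢ I.carrier,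
          K * (N * ENNReal.ofReal ((d1 * I.side) ^ α)) := by
        gcongr 1
        exact setLIntegral_mono' (I.measurableSet_carrier.prod I.measurableSet_carrier) hpt
    _ = _ := by
        rw [setLIntegral_const, Measure.volume_eq_prod, Measure.prod_prod]
        rw [mul_comm, mul_assoc, mul_assoc (volume I.carrier),
          ENNReal.mul_inv_cancel I.volume_ne_zero I.volume_ne_top, mul_one]

end Upper

/-! ### The Hölder norm is controlled by the sparse testing quantity -/

section Lower

open Filter Topology

variable {d1 d2 : ℕ} {b : Euc d1 × Euc d2 → ℂ}

theorem oscE_sub_triangle {d : ℕ} {f g h : Euc d → ℂ} (hf : Continuous f) (hg : Continuous g)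
    (hh : Continuous h) (S : Cube d) :
    oscE (fun x => f x - h x) S ≤ oscE (fun x => f x - g x) S + oscE (fun x => g x - h x) S := by
  rw [oscE, oscE, oscE, ← lintegral_add_left (by fun_prop)]
  refine lintegral_mono fun x => ?_
  rw [cubeAvg_sub hf hg, cubeAvg_sub hg hh, cubeAvg_sub hf hh]
  have : f x - h x - (cubeAvg f S - cubeAvg h S) =
    (f x - g x - (cubeAvg f S - cubeAvg g S)) + (g x - h x - (cubeAvg g S - cubeAvg h S)) := by
    ring
  rw [this]
  exact enorm_add_le _ _

theorem oscE_avgFst_sub_le (hb : Continuous b) {J J' : Cube d1}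
    (hJ : J'.carrier ⊆ J.carrier) (S : Cube d2) :
    oscE (fun x2 => avgFst b J' x2 - avgFst b J x2) S ≤
      (volume J'.carrier)⁻¹ * ENNReal.ofReal (osc11 b J S) := by
  have hF := continuous_avgFst hb J
  have hH : Continuous fun q : Euc d1 × Euc d2 => b q - avgFst b J q.2 := by fun_prop
  have h := oscE_avgFst_le hH J' S
  have e : avgFst (fun q : Euc d1 × Euc d2 => b q - avgFst b J q.2) J' =
      fun x2 => avgFst b J' x2 - avgFst b J x2 := by
    funext x2
    have h1 : Continuous fun y => b (y, x2) := by fun_prop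
    have h2 := cubeAvg_sub h1 (continuous_const (y := avgFst b J x2)) J'
    rw [cubeAvg_const] at h2
    exact h2
  rw [e] at h
  refine h.trans ?_
  rw [ofReal_osc11 hb]
  gcongr

theorem volume_half {J J' : Cube d1} (hs : J'.side = J.side / 2) :
    volume J.carrier = 2 ^ d1 * volume J'.carrier := by
  rw [Cube.volume_carrier, Cube.volume_carrier, hs, div_pow,
    show (2 : ℝ≥0∞) ^ d1 = ENNReal.ofReal (2 ^ d1) by
      rw [ENNReal.ofReal_pow (by norm_num)]; norm_num,
    ← ENNReal.ofReal_mul (by positivity)]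
  congr 1
  field_simp

theorem sum_oscE_avgFst_sub_le (hb : Continuous b) {α : ℝ} {M : ℝ≥0∞} {T : Finset (Cube d2)}
    {w : Cube d2 → ℝ≥0∞}
    (hM : ∀ I : Cube d1, ∑ S ∈ T, w S * ENNReal.ofReal (osc11 b I S) ≤
      M * (volume I.carrier * ENNReal.ofReal (I.side ^ α)))
    {J J' : Cube d1} (hJ : J'.carrier ⊆ J.carrier) (hs : J'.side = J.side / 2) :
    ∑ S ∈ T, w S * oscE (fun x2 => avgFst b J' x2 - avgFst b J x2) S ≤
      2 ^ d1 * M * ENNReal.ofReal (J.side ^ α) := by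
  calc _ ≤ ∑ S ∈ T, w S * ((volume J'.carrier)⁻¹ * ENNReal.ofReal (osc11 b J S)) := by
        gcongr with S
        exact oscE_avgFst_sub_le hb hJ S
    _ = (volume J'.carrier)⁻¹ * ∑ S ∈ T, w S * ENNReal.ofReal (osc11 b J S) := by
        rw [Finset.mul_sum]
        exact Finset.sum_congr rfl fun S _ => by ring
    _ ≤ (volume J'.carrier)⁻¹ * (M * (volume J.carrier * ENNReal.ofReal (J.side ^ α))) := by
        gcongr
        exact hM J
    _ = ((volume J'.carrier)⁻¹ * volume J'.carrier) *
          (2 ^ d1 * M * ENNReal.ofReal (J.side ^ α)) := by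
        rw [volume_half hs]; ring
    _ = _ := by rw [ENNReal.inv_mul_cancel J'.volume_ne_zero J'.volume_ne_top, one_mul]

/-- Summing the previous bound along a nested dyadic sequence of cubes. -/
theorem sum_oscE_telescope (hb : Continuous b) {α : ℝ} {M : ℝ≥0∞}
    {T : Finset (Cube d2)} {w : Cube d2 → ℝ≥0∞}
    (hM : ∀ I : Cube d1, ∑ S ∈ T, w S * ENNReal.ofReal (osc11 b I S) ≤
      M * (volume I.carrier * ENNReal.ofReal (I.side ^ α)))
    {J : ℕ → Cube d1} (hJ : ∀ k, (J (k + 1)).carrier ⊆ (J k).carrier)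
    (hs : ∀ k, (J (k + 1)).side = (J k).side / 2) (n : ℕ) :
    ∑ S ∈ T, w S * oscE (fun x2 => avgFst b (J n) x2 - avgFst b (J 0) x2) S ≤
      2 ^ d1 * M * ∑ k ∈ Finset.range n, ENNReal.ofReal ((J k).side ^ α) := by
  induction n with
  | zero =>
    have : ∀ S : Cube d2, oscE (fun _ => (0 : ℂ)) S = 0 := fun S => by
      simp [oscE, cubeAvg_const]
    simp [this]
  | succ n ih =>
    rw [Finset.sum_range_succ, mul_add]
    refine le_trans ?_ (add_le_add ih (sum_oscE_avgFst_sub_le hb hM (hJ n) (hs n)))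
    rw [← Finset.sum_add_distrib]
    refine Finset.sum_le_sum fun S _ => ?_
    rw [← mul_add]
    exact mul_le_mul' le_rfl ((oscE_sub_triangle (continuous_avgFst hb (J (n + 1)))
      (continuous_avgFst hb (J n)) (continuous_avgFst hb (J 0)) S).trans_eq (add_comm _ _))

theorem sum_side_rpow_le {α : ℝ} (hα : 0 < α) {J : ℕ → Cube d1}
    (hs : ∀ k, (J (k + 1)).side = (J k).side / 2) (n : ℕ) :
    ∑ k ∈ Finset.range n, ENNReal.ofReal ((J k).side ^ α) ≤
      ENNReal.ofReal ((1 - 2 ^ (-α))⁻¹ * (J 0).side ^ α) := by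
  have h0 := (J 0).side_pos
  have hq0 : (0 : ℝ) ≤ 2 ^ (-α) := by positivity
  have hq1 : (2 : ℝ) ^ (-α) < 1 := Real.rpow_lt_one_of_one_lt_of_neg (by norm_num) (by linarith)
  have hk : ∀ k, (J k).side ^ α = (2 ^ (-α)) ^ k * (J 0).side ^ α := by
    intro k
    induction k with
    | zero => simp
    | succ k ih =>
      rw [hs, div_eq_mul_inv, Real.mul_rpow (J k).side_pos.le (by norm_num), ih, pow_succ,
        Real.inv_rpow (by norm_num), Real.rpow_neg (by norm_num)]
      ring
  rw [← ENNReal.ofReal_sum_of_nonneg fun k _ => Real.rpow_nonneg (J k).side_pos.le _]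
  refine ENNReal.ofReal_le_ofReal ?_
  rw [Finset.sum_congr rfl fun k _ => hk k, ← Finset.sum_mul]
  gcongr
  rw [← tsum_geometric_of_lt_one hq0 hq1]
  exact (summable_geometric_of_lt_one hq0 hq1).sum_le_tsum _ fun k _ => pow_nonneg hq0 k

/-- The averages over cubes shrinking to `z` converge to `b (z, ·)` uniformly on compact sets, so
the oscillation of the error tends to zero. -/
theorem tendsto_oscE_avgFst (hb : Continuous b) {J : ℕ → Cube d1} {z : Euc d1}
    (hz : ∀ k, z ∈ (J k).carrier) (hJ : ∀ k, (J k).carrier ⊆ (J 0).carrier)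
    (hs : Tendsto (fun k => (J k).side) atTop (𝓝 0)) (S : Cube d2) :
    Tendsto (fun n => oscE (fun x2 => b (z, x2) - avgFst b (J n) x2) S) atTop (𝓝 0) := by
  rw [ENNReal.tendsto_nhds_zero]
  intro ε hε
  obtain ⟨η, hη0, hη⟩ : ∃ η : ℝ, 0 < η ∧ 2 * (ENNReal.ofReal η * volume S.carrier) ≤ ε := by
    by_cases hεt : ε = ∞
    · exact ⟨1, one_pos, by simp [hεt]⟩
    have hε' : 0 < ε.toReal := ENNReal.toReal_pos hε.ne' hεt
    have hv := S.volume_toReal_pos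
    refine ⟨ε.toReal / (2 * (volume S.carrier).toReal), by positivity, ?_⟩
    have h2 : (2 : ℝ≥0∞) = ENNReal.ofReal 2 := by norm_num
    have h3 : 2 * (ENNReal.ofReal (ε.toReal / (2 * (volume S.carrier).toReal)) *
        volume S.carrier) = ENNReal.ofReal (2 * (ε.toReal / (2 * (volume S.carrier).toReal) *
          (volume S.carrier).toReal)) := by
      rw [ENNReal.ofReal_mul zero_le_two, ENNReal.ofReal_mul (by positivity),
        ENNReal.ofReal_toReal S.volume_ne_top, ← h2]
    rw [h3]
    refine ENNReal.ofReal_le_of_le_toReal (le_of_eq ?_)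
    field_simp
  have hK : IsCompact ((J 0).carrier ×ˢ S.carrier) :=
    (J 0).isCompact_carrier.prod S.isCompact_carrier
  have hu := hK.uniformContinuousOn_of_continuous hb.continuousOn
  obtain ⟨δ, hδ, hδ'⟩ := Metric.uniformContinuousOn_iff.1 hu η hη0
  have hev : ∀ᶠ n in atTop, (d1 : ℝ) * (J n).side < δ := by
    have := hs.const_mul (d1 : ℝ)
    rw [mul_zero] at this
    exact this.eventually (gt_mem_nhds hδ)
  filter_upwards [hev] with n hn
  have hF := continuous_avgFst hb (J n)
  have hpt : ∀ x2 ∈ S.carrier, ‖b (z, x2) - avgFst b (J n) x2 - 0‖ₑ ≤ ENNReal.ofReal η := by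
    intro x2 hx2
    have h1 : Continuous fun y => b (y, x2) := by fun_prop
    have h2 := enorm_cubeAvg_sub_le h1 (J n) (b (z, x2))
    rw [sub_zero, enorm_sub_rev]
    refine h2.trans ?_
    calc _ ≤ (volume (J n).carrier)⁻¹ * ∫⁻ y in (J n).carrier, ENNReal.ofReal η := by
          gcongr 1
          refine setLIntegral_mono' (J n).measurableSet_carrier fun y hy => ?_
          rw [← ofReal_norm]
          refine ENNReal.ofReal_le_ofReal ?_
          rw [← dist_eq_norm]
          refine (hδ' (y, x2) ⟨hJ n hy, hx2⟩ (z, x2) ⟨hJ n (hz n), hx2⟩ ?_).le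
          rw [Prod.dist_eq, dist_self, max_eq_left dist_nonneg]
          exact ((J n).dist_le hy (hz n)).trans_lt hn
      _ = ENNReal.ofReal η := by
          rw [setLIntegral_const, mul_comm, mul_assoc,
            ENNReal.mul_inv_cancel (J n).volume_ne_zero (J n).volume_ne_top, mul_one]
  calc _ ≤ 2 * ∫⁻ x2 in S.carrier, ‖b (z, x2) - avgFst b (J n) x2 - 0‖ₑ :=
        oscE_le_two_mul (by fun_prop) S 0
    _ ≤ 2 * ∫⁻ x2 in S.carrier, ENNReal.ofReal η := by
        gcongr 1
        exact setLIntegral_mono' S.measurableSet_carrier hpt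
    _ ≤ ε := by rwa [setLIntegral_const]

theorem sum_oscE_slice_sub_avgFst_le (hb : Continuous b) {α : ℝ} (hα : 0 < α) {M : ℝ≥0∞}
    {T : Finset (Cube d2)} {w : Cube d2 → ℝ≥0∞} (hw : ∀ S, w S ≠ ∞)
    (hM : ∀ I : Cube d1, ∑ S ∈ T, w S * ENNReal.ofReal (osc11 b I S) ≤
      M * (volume I.carrier * ENNReal.ofReal (I.side ^ α)))
    {J : ℕ → Cube d1} {z : Euc d1} (hz : ∀ k, z ∈ (J k).carrier)
    (hJ : ∀ k, (J (k + 1)).carrier ⊆ (J k).carrier)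
    (hs : ∀ k, (J (k + 1)).side = (J k).side / 2) :
    ∑ S ∈ T, w S * oscE (fun x2 => b (z, x2) - avgFst b (J 0) x2) S ≤
      2 ^ d1 * M * ENNReal.ofReal ((1 - 2 ^ (-α))⁻¹ * (J 0).side ^ α) := by
  have hJ0 : ∀ k, (J k).carrier ⊆ (J 0).carrier := fun k =>
    antitone_nat_of_succ_le (f := fun k => (J k).carrier) hJ (Nat.zero_le k)
  have hside : Tendsto (fun k => (J k).side) atTop (𝓝 0) := by
    have : ∀ k, (J k).side = (J 0).side * (1 / 2) ^ k := by
      intro k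
      induction k with
      | zero => simp
      | succ k ih => rw [hs, ih]; ring
    refine Tendsto.congr (fun k => (this k).symm) ?_
    simpa using (tendsto_pow_atTop_nhds_zero_of_lt_one (by norm_num : (0 : ℝ) ≤ 1 / 2)
      (by norm_num)).const_mul (J 0).side
  have hlim : Tendsto (fun n => ∑ S ∈ T, w S * oscE (fun x2 => b (z, x2) - avgFst b (J n) x2) S)
      atTop (𝓝 0) := by
    have := tendsto_finsetSum T fun S _ =>
      ENNReal.Tendsto.const_mul (tendsto_oscE_avgFst hb hz hJ0 hside S) (Or.inr (hw S))
    simpa using this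
  refine ge_of_tendsto' (f := fun n => (∑ S ∈ T,
    w S * oscE (fun x2 => b (z, x2) - avgFst b (J n) x2) S) +
      2 ^ d1 * M * ENNReal.ofReal ((1 - 2 ^ (-α))⁻¹ * (J 0).side ^ α)) (x := atTop) ?_ fun n => ?_
  · simpa using hlim.add_const (2 ^ d1 * M * ENNReal.ofReal ((1 - 2 ^ (-α))⁻¹ * (J 0).side ^ α))
  · have h1 := sum_oscE_telescope hb hM hJ hs n
    have h2 := sum_side_rpow_le hα hs n
    calc _ ≤ ∑ S ∈ T, (w S * oscE (fun x2 => b (z, x2) - avgFst b (J n) x2) S +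
          w S * oscE (fun x2 => avgFst b (J n) x2 - avgFst b (J 0) x2) S) := by
          refine Finset.sum_le_sum fun S _ => ?_
          rw [← mul_add]
          gcongr
          exact oscE_sub_triangle (by fun_prop) (continuous_avgFst hb _)
            (continuous_avgFst hb _) S
      _ ≤ _ := by
          rw [Finset.sum_add_distrib]
          gcongr
          exact h1.trans (by gcongr)

/-- Both `b (x, ·)` and `b (y, ·)` are compared to the average of `b` over the cube centred at `x`
of side `4 |x - y|`, along dyadic sequences shrinking to `x` and to `y`. -/
theorem sum_oscE_diff_le (hb : Continuous b) {α : ℝ} (hα : 0 < α) {M : ℝ≥0∞}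
    {T : Finset (Cube d2)} {w : Cube d2 → ℝ≥0∞} (hw : ∀ S, w S ≠ ∞)
    (hM : ∀ I : Cube d1, ∑ S ∈ T, w S * ENNReal.ofReal (osc11 b I S) ≤
      M * (volume I.carrier * ENNReal.ofReal (I.side ^ α)))
    {x y : Euc d1} (hxy : x ≠ y) :
    ∑ S ∈ T, w S * oscE (fun x2 => b (x, x2) - b (y, x2)) S ≤
      2 * (2 ^ d1 * M * ENNReal.ofReal ((1 - 2 ^ (-α))⁻¹ * (4 * dist x y) ^ α)) := by
  set ρ := dist x y with hρ
  have hρ0 : 0 < ρ := dist_pos.2 hxy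
  have key : ∀ z : Euc d1, dist x z ≤ ρ →
      ∑ S ∈ T, w S * oscE (fun x2 => b (z, x2) -
        avgFst b (⟨x, 4 * ρ, by positivity⟩ : Cube d1) x2) S ≤
      2 ^ d1 * M * ENNReal.ofReal ((1 - 2 ^ (-α))⁻¹ * (4 * ρ) ^ α) := by
    intro z hz
    have hzx : ∀ i, |z i - x i| ≤ ρ := fun i => by
      have := abs_coord_sub_le x z i
      rw [abs_sub_comm]
      linarith
    let J : ℕ → Cube d1 := fun k => Nat.casesOn k ⟨x, 4 * ρ, by positivity⟩
      fun k => ⟨z, 4 * ρ / 2 ^ (k + 1), by positivity⟩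
    refine sum_oscE_slice_sub_avgFst_le hb hα hw hM (J := J) (z := z) ?_ ?_ ?_
    · rintro (_ | k) i
      · change |z i - x i| ≤ 4 * ρ / 2
        linarith [hzx i]
      · change |z i - z i| ≤ 4 * ρ / 2 ^ (k + 1) / 2
        rw [sub_self, abs_zero]
        positivity
    · rintro (_ | k) u hu i
      · have h1 : |u i - z i| ≤ 4 * ρ / 2 ^ (0 + 1) / 2 := hu i
        change |u i - x i| ≤ 4 * ρ / 2
        have h2 := abs_sub_le (u i) (z i) (x i)
        have h3 := hzx i
        norm_num at h1
        linarith
      · have h1 : |u i - z i| ≤ 4 * ρ / 2 ^ (k + 1 + 1) / 2 := hu i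
        change |u i - z i| ≤ 4 * ρ / 2 ^ (k + 1) / 2
        refine h1.trans ?_
        gcongr
        · norm_num
        · omega
    · rintro (_ | k)
      · change 4 * ρ / 2 ^ (0 + 1) = 4 * ρ / 2
        norm_num
      · change 4 * ρ / 2 ^ (k + 1 + 1) = 4 * ρ / 2 ^ (k + 1) / 2
        rw [pow_succ, div_div]
  have hF := continuous_avgFst hb (⟨x, 4 * ρ, by positivity⟩ : Cube d1)
  rw [two_mul]
  refine le_trans ?_ (add_le_add (key x (by rw [dist_self]; exact hρ0.le)) (key y le_rfl))
  rw [← Finset.sum_add_distrib]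
  refine Finset.sum_le_sum fun S _ => ?_
  rw [← mul_add]
  gcongr
  have h := oscE_sub_le
    (f := fun x2 => b (x, x2) - avgFst b (⟨x, 4 * ρ, by positivity⟩ : Cube d1) x2)
    (g := fun x2 => b (y, x2) - avgFst b (⟨x, 4 * ρ, by positivity⟩ : Cube d1) x2)
    (by fun_prop) (by fun_prop) S
  simpa only [sub_sub_sub_cancel_right] using h

end Lower


/-! ### Assembling the two estimates -/

section Assembly

variable {d1 d2 : ℕ} {b : Euc d1 × Euc d2 → ℂ}

theorem ofReal_volume_mul_rpow {d : ℕ} (S : Cube d) {x r : ℝ} (hx : 0 ≤ x) (hr : 0 ≤ r) :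
    ENNReal.ofReal ((volume S.carrier).toReal * x ^ r) =
      volume S.carrier * ENNReal.ofReal x ^ r := by
  rw [ENNReal.ofReal_mul ENNReal.toReal_nonneg, ENNReal.ofReal_toReal S.volume_ne_top,
    ENNReal.ofReal_rpow_of_nonneg hx hr]

theorem ofReal_inv_volume_mul_side (I : Cube d1) (α : ℝ) :
    ENNReal.ofReal (((volume I.carrier).toReal * I.side ^ α)⁻¹) =
      (volume I.carrier * ENNReal.ofReal (I.side ^ α))⁻¹ := by
  rw [ENNReal.ofReal_inv_of_pos (mul_pos I.volume_toReal_pos (Real.rpow_pos_of_pos I.side_pos _)),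
    ENNReal.ofReal_mul ENNReal.toReal_nonneg, ENNReal.ofReal_toReal I.volume_ne_top]

theorem volume_mul_side_ne_zero (I : Cube d1) (α : ℝ) :
    volume I.carrier * ENNReal.ofReal (I.side ^ α) ≠ 0 :=
  mul_ne_zero I.volume_ne_zero
    (ENNReal.ofReal_pos.2 (Real.rpow_pos_of_pos I.side_pos _)).ne'

theorem volume_mul_side_ne_top (I : Cube d1) (α : ℝ) :
    volume I.carrier * ENNReal.ofReal (I.side ^ α) ≠ ∞ :=
  ENNReal.mul_ne_top I.volume_ne_top ENNReal.ofReal_ne_top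

/-- The mixed Hölder quantity `‖b‖_{Ċ^{0,α}_{x1}(∙L^r_{x2})}`. -/
def mixedHolder (α r : ℝ) (b : Euc d1 × Euc d2 → ℂ) : ℝ≥0∞ :=
  ⨆ (x1 : Euc d1) (y1 : Euc d1) (_ : x1 ≠ y1),
    (ENNReal.ofReal (dist x1 y1 ^ α))⁻¹ *
      ⨅ c : ℂ, eLpNorm (fun x2 => b (x1, x2) - b (y1, x2) - c) (ENNReal.ofReal r) volume

/-- The sparse testing quantity: the supremum of the normalised sums
`∑ λ_S osc^{1,1}(b, I × S)` over cubes `I` and sparse families with admissible coefficients. -/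
def sparseTest (α r' : ℝ) (b : Euc d1 × Euc d2 → ℂ) : ℝ≥0∞ :=
  ⨆ (I1 : Cube d1) (𝒮 : Set (Cube d2)) (lam : Cube d2 → ℝ) (_ : IsSparse 𝒮)
      (_ : ∀ Q, 0 ≤ lam Q)
      (_ : ∑' S : 𝒮, ENNReal.ofReal ((volume S.1.carrier).toReal * lam S.1 ^ r') ≤ 1),
    ENNReal.ofReal (((volume I1.carrier).toReal * I1.side ^ α)⁻¹) *
      ∑' S : 𝒮, ENNReal.ofReal (lam S.1 * osc11 b I1 S.1)

theorem sparseTest_le {r r' α : ℝ} (hrr : r.HolderConjugate r') (hα : 0 < α)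
    (hb : Continuous b) :
    sparseTest α r' b ≤
      2 * ENNReal.ofReal (4 * 5 ^ d2 * r * 2 ^ (r - 1) / (r - 1)) ^ (1 / r) *
        ENNReal.ofReal ((d1 : ℝ) ^ α) * mixedHolder α r b := by
  set K : ℝ≥0∞ := 2 * ENNReal.ofReal (4 * 5 ^ d2 * r * 2 ^ (r - 1) / (r - 1)) ^ (1 / r)
    with hK
  have hN : ∀ x y : Euc d1, ⨅ c : ℂ, eLpNorm (fun x2 => b (x, x2) - b (y, x2) - c)
      (ENNReal.ofReal r) volume ≤ mixedHolder α r b * ENNReal.ofReal (dist x y ^ α) := by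
    intro x y
    rcases eq_or_ne x y with rfl | hxy
    · refine (iInf_le _ 0).trans ?_
      simp
    · have h0 : ENNReal.ofReal (dist x y ^ α) ≠ 0 :=
        (ENNReal.ofReal_pos.2 (Real.rpow_pos_of_pos (dist_pos.2 hxy) _)).ne'
      rw [mul_comm, ← ENNReal.inv_mul_le_iff h0 ENNReal.ofReal_ne_top]
      exact le_iSup_of_le x (le_iSup_of_le y (le_iSup_of_le hxy le_rfl))
  refine iSup_le fun I => iSup_le fun 𝒮 => iSup_le fun lam => iSup_le fun hsp => iSup_le fun hl =>
    iSup_le fun hsum => ?_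
  rw [ofReal_inv_volume_mul_side,
    ENNReal.inv_mul_le_iff (volume_mul_side_ne_zero I α) (volume_mul_side_ne_top I α),
    ENNReal.tsum_eq_iSup_sum]
  refine iSup_le fun s => ?_
  -- a finite subfamily of `𝒮`, seen as a finite set of cubes
  let T : Finset (Cube d2) := s.map (Function.Embedding.subtype _)
  have hT : IsSparse (T : Set (Cube d2)) := by
    refine hsp.mono ?_
    intro Q hQ
    obtain ⟨S, _, rfl⟩ := Finset.mem_map.1 (Finset.mem_coe.1 hQ)
    exact S.2
  have hlam : ∑ S ∈ T, volume S.carrier * ENNReal.ofReal (lam S) ^ r' ≤ 1 := by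
    rw [Finset.sum_map]
    refine le_trans (le_of_eq ?_) ((ENNReal.sum_le_tsum s).trans hsum)
    exact Finset.sum_congr rfl fun S _ =>
      (ofReal_volume_mul_rpow S.1 (hl S.1) hrr.symm.nonneg).symm
  have h := sum_osc11_le hrr hα hb hN I T hT (fun S => ENNReal.ofReal (lam S)) hlam
  rw [Finset.sum_map] at h
  calc ∑ S ∈ s, ENNReal.ofReal (lam S.1 * osc11 b I S.1)
      = ∑ S ∈ s, ENNReal.ofReal (lam S.1) * ENNReal.ofReal (osc11 b I S.1) :=
        Finset.sum_congr rfl fun S _ => ENNReal.ofReal_mul (hl S.1)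
    _ ≤ _ := h
    _ = _ := by
        rw [Real.mul_rpow (Nat.cast_nonneg _) I.side_pos.le,
          ENNReal.ofReal_mul (by positivity)]
        ring

theorem mixedHolder_le {r r' α : ℝ} (hrr : r.HolderConjugate r') (hα : 0 < α)
    (hb : Continuous b) :
    mixedHolder α r b ≤
      2 ^ (d2 + 1) * ENNReal.ofReal (4 * 5 ^ d2 * r' * 2 ^ (r' - 1) / (r' - 1)) ^ (1 / r') *
        (2 * 2 ^ d1 * ENNReal.ofReal ((1 - 2 ^ (-α))⁻¹ * 4 ^ α)) * sparseTest α r' b := by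
  refine iSup_le fun x => iSup_le fun y => iSup_le fun hxy => ?_
  have h0 : ENNReal.ofReal (dist x y ^ α) ≠ 0 :=
    (ENNReal.ofReal_pos.2 (Real.rpow_pos_of_pos (dist_pos.2 hxy) _)).ne'
  rw [ENNReal.inv_mul_le_iff h0 ENNReal.ofReal_ne_top]
  have hf : Continuous fun x2 => b (x, x2) - b (y, x2) := by fun_prop
  refine (iInf_eLpNorm_le hrr hf (A := 2 * (2 ^ d1 * sparseTest α r' b *
    ENNReal.ofReal ((1 - 2 ^ (-α))⁻¹ * (4 * dist x y) ^ α))) fun T hT lam hl hlam => ?_).trans_eq ?_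
  · refine sum_oscE_diff_le hb hα (fun S => ENNReal.ofReal_ne_top) (fun I => ?_) hxy
    rw [mul_comm (sparseTest α r' b),
      ← ENNReal.inv_mul_le_iff (volume_mul_side_ne_zero I α) (volume_mul_side_ne_top I α),
      ← ofReal_inv_volume_mul_side]
    have hsum : ∑' S : (T : Set (Cube d2)),
        ENNReal.ofReal ((volume S.1.carrier).toReal * lam S.1 ^ r') ≤ 1 := by
      refine le_trans (le_of_eq ?_) hlam
      rw [Finset.tsum_subtype' T
        fun S => ENNReal.ofReal ((volume S.carrier).toReal * lam S ^ r')]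
      exact Finset.sum_congr rfl fun S _ => ofReal_volume_mul_rpow S (hl S) hrr.symm.nonneg
    refine le_trans (le_of_eq ?_) (le_iSup_of_le I (le_iSup_of_le (T : Set (Cube d2))
      (le_iSup_of_le lam (le_iSup_of_le hT (le_iSup_of_le hl (le_iSup_of_le hsum le_rfl))))))
    rw [Finset.tsum_subtype' T fun S => ENNReal.ofReal (lam S * osc11 b I S)]
    congr 1
    exact Finset.sum_congr rfl fun S _ => (ENNReal.ofReal_mul (hl S)).symm
  · rw [Real.mul_rpow (by norm_num) dist_nonneg, ← mul_assoc (1 - (2 : ℝ) ^ (-α))⁻¹,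
      ENNReal.ofReal_mul (p := (1 - (2 : ℝ) ^ (-α))⁻¹ * 4 ^ α)]
    · ring
    · have : (2 : ℝ) ^ (-α) < 1 := Real.rpow_lt_one_of_one_lt_of_neg (by norm_num) (by linarith)
      have : 0 < 1 - (2 : ℝ) ^ (-α) := by linarith
      positivity

end Assembly

theorem statement6 (d1 d2 : ℕ) (hd1 : 1 ≤ d1) (hd2 : 1 ≤ d2) (α : ℝ) (hα : 0 < α)
    (r r' : ℝ) (hr : 1 < r) (hr' : 1 / r + 1 / r' = 1) :
    ∃ C : ℝ, 1 ≤ C ∧ ∀ b : Euc d1 × Euc d2 → ℂ, Continuous b →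
      (ENNReal.ofReal C)⁻¹ *
          (⨆ (I1 : Cube d1) (𝒮 : Set (Cube d2)) (lam : Cube d2 → ℝ) (_ : IsSparse 𝒮)
              (_ : ∀ Q, 0 ≤ lam Q)
              (_ : ∑' S : 𝒮, ENNReal.ofReal ((volume S.1.carrier).toReal * lam S.1 ^ r') ≤ 1),
            ENNReal.ofReal (((volume I1.carrier).toReal * I1.side ^ α)⁻¹) *
              ∑' S : 𝒮, ENNReal.ofReal (lam S.1 * osc11 b I1 S.1))
        ≤ (⨆ (x1 : Euc d1) (y1 : Euc d1) (_ : x1 ≠ y1),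
            (ENNReal.ofReal (dist x1 y1 ^ α))⁻¹ *
              ⨅ c : ℂ, eLpNorm (fun x2 => b (x1, x2) - b (y1, x2) - c)
                (ENNReal.ofReal r) volume) ∧
      (⨆ (x1 : Euc d1) (y1 : Euc d1) (_ : x1 ≠ y1),
          (ENNReal.ofReal (dist x1 y1 ^ α))⁻¹ *
            ⨅ c : ℂ, eLpNorm (fun x2 => b (x1, x2) - b (y1, x2) - c)
              (ENNReal.ofReal r) volume)
        ≤ ENNReal.ofReal C *
          (⨆ (I1 : Cube d1) (𝒮 : Set (Cube d2)) (lam : Cube d2 → ℝ) (_ : IsSparse 𝒮)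
              (_ : ∀ Q, 0 ≤ lam Q)
              (_ : ∑' S : 𝒮, ENNReal.ofReal ((volume S.1.carrier).toReal * lam S.1 ^ r') ≤ 1),
            ENNReal.ofReal (((volume I1.carrier).toReal * I1.side ^ α)⁻¹) *
              ∑' S : 𝒮, ENNReal.ofReal (lam S.1 * osc11 b I1 S.1)) := by
  have hrr : r.HolderConjugate r' := by
    rw [Real.holderConjugate_iff]
    exact ⟨hr, by simpa only [one_div] using hr'⟩
  set K1 : ℝ≥0∞ := 2 * ENNReal.ofReal (4 * 5 ^ d2 * r * 2 ^ (r - 1) / (r - 1)) ^ (1 / r) *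
    ENNReal.ofReal ((d1 : ℝ) ^ α) with hK1
  set K2 : ℝ≥0∞ :=
    2 ^ (d2 + 1) * ENNReal.ofReal (4 * 5 ^ d2 * r' * 2 ^ (r' - 1) / (r' - 1)) ^ (1 / r') *
      (2 * 2 ^ d1 * ENNReal.ofReal ((1 - 2 ^ (-α))⁻¹ * 4 ^ α)) with hK2
  have hK1t : K1 ≠ ∞ :=
    ENNReal.mul_ne_top (ENNReal.mul_ne_top ENNReal.ofNat_ne_top
      (ENNReal.rpow_ne_top_of_nonneg hrr.one_div_nonneg ENNReal.ofReal_ne_top))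
      ENNReal.ofReal_ne_top
  have hK2t : K2 ≠ ∞ :=
    ENNReal.mul_ne_top (ENNReal.mul_ne_top (ENNReal.pow_ne_top ENNReal.ofNat_ne_top)
      (ENNReal.rpow_ne_top_of_nonneg hrr.symm.one_div_nonneg ENNReal.ofReal_ne_top))
      (ENNReal.mul_ne_top (ENNReal.mul_ne_top ENNReal.ofNat_ne_top
        (ENNReal.pow_ne_top ENNReal.ofNat_ne_top)) ENNReal.ofReal_ne_top)
  refine ⟨max 1 (max K1.toReal K2.toReal), le_max_left _ _, fun b hb => ⟨?_, ?_⟩⟩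
  · rw [ENNReal.inv_mul_le_iff (ENNReal.ofReal_pos.2 (lt_max_of_lt_left one_pos)).ne'
      ENNReal.ofReal_ne_top]
    refine (sparseTest_le hrr hα hb).trans (mul_le_mul' ?_ le_rfl)
    rw [← hK1, ENNReal.le_ofReal_iff_toReal_le hK1t (by positivity)]
    exact (le_max_left _ _).trans (le_max_right _ _)
  · refine (mixedHolder_le hrr hα hb).trans (mul_le_mul' ?_ le_rfl)
    rw [← hK2, ENNReal.le_ofReal_iff_toReal_le hK2t (by positivity)]
    exact (le_max_right _ _).trans (le_max_right _ _)
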